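/- Let M be a connected multigraph with m = ‖M‖ edges and let G be a graph on n = |V(G)| vertices. If the family L(M,G) of maximum M-subdivisions in G is pairwise intersecting and n ≥ m^6 (with m^3 < n), then τ(M,G) ≤ 5·n^{2/3}. -/

import Mathlib

open SimpleGraph

/-- A multigraph with vertex type `W` and edge type `F`: each edge has an
unordered pair of endpoints (possibly equal, giving a loop). -/
structure Multigraph (W : Type*) (F : Type*) where
  ends : F → Sym2 W

namespace Multigraph

variable {W F : Type*}

/-- Adjacency in a multigraph. -/
def Adj (M : Multigraph W F) (u v : W) : Prop :=
  ∃ e : F, M.ends e = s(u, v)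

/-- A multigraph is connected if it is nonempty and any two vertices are joined by a walk. -/
def Connected (M : Multigraph W F) : Prop :=
  Nonempty W ∧ ∀ u v : W, Relation.ReflTransGen M.Adj u v

/-- Delete the edge `e` from the multigraph `M`. -/
def deleteEdge (M : Multigraph W F) (e : F) : Multigraph W {f : F // f ≠ e} where
  ends f := M.ends f.1

/-- An edge of a (connected) multigraph is a cut-edge if deleting it disconnects
the multigraph. -/
def IsCutEdge (M : Multigraph W F) (e : F) : Prop :=
  ¬ (M.deleteEdge e).Connected

end Multigraph

variable {V W F : Type*}

/-- `Q` is (the subgraph realizing) an `M`-subdivision inside the simple graph `G`: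
there is an injective placement `b` of the branch vertices of `M`, and for each edge
`e` of `M` with ends `u e`, `v e` a path (a cycle, if `e` is a loop) of `G` joining
`b (u e)` to `b (v e)`; these paths are internally disjoint from each other and from
the branch vertices, are pairwise edge-disjoint, and their union is exactly `Q`. -/
def IsSubdivisionIn (M : Multigraph W F) (G : SimpleGraph V) (Q : G.Subgraph) : Prop :=
  ∃ (b : W → V) (u v : F → W) (P : ∀ e : F, G.Walk (b (u e)) (b (v e))),
    Function.Injective b ∧
    (∀ e, M.ends e = s(u e, v e)) ∧
    (∀ e, ∀ h : u e = v e, ((P e).copy rfl (congrArg b h.symm)).IsCycle) ∧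
    (∀ e, u e ≠ v e → (P e).IsPath) ∧
    (∀ e, ∀ x ∈ (P e).support, x ∈ Set.range b → x = b (u e) ∨ x = b (v e)) ∧
    (∀ e e', e ≠ e' → ∀ x, x ∈ (P e).support → x ∈ (P e').support → x ∈ Set.range b) ∧
    (∀ e e', e ≠ e' → ∀ a, a ∈ (P e).edges → a ∉ (P e').edges) ∧
    Q.verts = Set.range b ∪ ⋃ e, {x | x ∈ (P e).support} ∧
    (∀ x y, Q.Adj x y ↔ ∃ e, (P e).toSubgraph.Adj x y)

/-- `Q` is a maximum `M`-subdivision among those contained in the subgraph `H` of `G`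
(maximum with respect to the number of edges). -/
def IsMaxSubdivisionIn (M : Multigraph W F) (G : SimpleGraph V) (H Q : G.Subgraph) : Prop :=
  IsSubdivisionIn M G Q ∧ Q ≤ H ∧
    ∀ R : G.Subgraph, IsSubdivisionIn M G R → R ≤ H →
      R.edgeSet.ncard ≤ Q.edgeSet.ncard

/-- The family `L(M,H)` of maximum `M`-subdivisions in `H` is pairwise intersecting. -/
def PairwiseIntersectingIn (M : Multigraph W F) (G : SimpleGraph V) (H : G.Subgraph) : Prop :=
  ∀ Q R : G.Subgraph, IsMaxSubdivisionIn M G H Q → IsMaxSubdivisionIn M G H R →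
    (Q.verts ∩ R.verts).Nonempty

/-- `S` is a transversal of the family `L(M,H)` of maximum `M`-subdivisions in `H`. -/
def IsTransversalIn (M : Multigraph W F) (G : SimpleGraph V) (H : G.Subgraph)
    (S : Set V) : Prop :=
  ∀ Q : G.Subgraph, IsMaxSubdivisionIn M G H Q → (S ∩ Q.verts).Nonempty

/-- `(X, Y)` is an `H`-pretransversal: `Y ⊆ X ⊆ V(H)`, `n^{1/3}·|Y| ≤ |X|`
(where `n = |V(G)|`), and every maximum `M`-subdivision `Q` in `H` satisfies
`Q ⊆ H − X` or `Q ∩ Y ≠ ∅`. -/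
def IsPretransversal [Fintype V] (M : Multigraph W F) (G : SimpleGraph V)
    (H : G.Subgraph) (X Y : Set V) : Prop :=
  Y ⊆ X ∧ X ⊆ H.verts ∧
    (Fintype.card V : ℝ) ^ ((1 : ℝ) / 3) * (Y.ncard : ℝ) ≤ (X.ncard : ℝ) ∧
    ∀ Q : G.Subgraph, IsMaxSubdivisionIn M G H Q →
      Q ≤ H.deleteVerts X ∨ (Q.verts ∩ Y).Nonempty

/-- An `A,B`-connector of size `k` inside the subgraph `H` of `G`: `k` pairwise
vertex-disjoint paths of `H`, each meeting `A` exactly in its first vertex and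
meeting `B` exactly in its last vertex. -/
def IsConnector (G : SimpleGraph V) (H : G.Subgraph) (A B : Set V) (k : ℕ) : Prop :=
  ∃ (a : Fin k → V) (b : Fin k → V) (p : ∀ i : Fin k, G.Walk (a i) (b i)),
    (∀ i, (p i).IsPath) ∧
    (∀ i, (p i).toSubgraph ≤ H) ∧
    (∀ i, {x | x ∈ (p i).support} ∩ A = {a i}) ∧
    (∀ i, {x | x ∈ (p i).support} ∩ B = {b i}) ∧
    (∀ i j, i ≠ j → ∀ x, x ∈ (p i).support → x ∉ (p j).support)

/-- Some walk of `G` from `A` to `B` avoids the vertex `w`. -/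
def LinkedAvoiding {V : Type*} (G : SimpleGraph V) (A B : Set V) (w : V) : Prop :=
  ∃ a ∈ A, ∃ b ∈ B, ∃ p : G.Walk a b, w ∉ p.support

theorem LinkedAvoiding.symm {V : Type*} {G : SimpleGraph V} {A B : Set V} {w : V}
    (h : LinkedAvoiding G A B w) : LinkedAvoiding G B A w := by
  obtain ⟨a, ha, b, hb, p, hp⟩ := h
  exact ⟨b, hb, a, ha, p.reverse, by simpa using hp⟩

theorem walk_deleteEdge_cases {V : Type*} {G : SimpleGraph V} (x y : V) {a b : V}
    (p : G.Walk a b) :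
    (∃ q : (G.deleteEdges {s(x, y)}).Walk a b, q.support ⊆ p.support) ∨
    (∃ (q : (G.deleteEdges {s(x, y)}).Walk a x) (r : (G.deleteEdges {s(x, y)}).Walk y b),
      q.support ⊆ p.support ∧ r.support ⊆ p.support) ∨
    (∃ (q : (G.deleteEdges {s(x, y)}).Walk a y) (r : (G.deleteEdges {s(x, y)}).Walk x b),
      q.support ⊆ p.support ∧ r.support ⊆ p.support) := by
  induction p with
  | nil => exact Or.inl ⟨Walk.nil, by simp⟩
  | @cons a c b h p ih =>
    have hsub : p.support ⊆ (Walk.cons h p).support := by simp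
    by_cases he : s(a, c) = s(x, y)
    · rcases Sym2.eq_iff.1 he with ⟨rfl, rfl⟩ | ⟨rfl, rfl⟩
      · rcases ih with ⟨q, hq⟩ | ⟨q, r, hq, hr⟩ | ⟨q, r, hq, hr⟩
        · exact Or.inr (Or.inl ⟨Walk.nil, q, by simp, List.Subset.trans hq hsub⟩)
        · exact Or.inr (Or.inl ⟨Walk.nil, r, by simp, List.Subset.trans hr hsub⟩)
        · exact Or.inl ⟨r, List.Subset.trans hr hsub⟩
      · rcases ih with ⟨q, hq⟩ | ⟨q, r, hq, hr⟩ | ⟨q, r, hq, hr⟩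
        · exact Or.inr (Or.inr ⟨Walk.nil, q, by simp, List.Subset.trans hq hsub⟩)
        · exact Or.inl ⟨r, List.Subset.trans hr hsub⟩
        · exact Or.inr (Or.inr ⟨Walk.nil, r, by simp, List.Subset.trans hr hsub⟩)
    · have h' : (G.deleteEdges {s(x, y)}).Adj a c := by
        simp only [deleteEdges_adj, Set.mem_singleton_iff]
        exact ⟨h, he⟩
      rcases ih with ⟨q, hq⟩ | ⟨q, r, hq, hr⟩ | ⟨q, r, hq, hr⟩
      · exact Or.inl ⟨Walk.cons h' q, by
          simpa using List.cons_subset_cons a hq⟩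
      · exact Or.inr (Or.inl ⟨Walk.cons h' q, r, by
          simpa using List.cons_subset_cons a hq, List.Subset.trans hr hsub⟩)
      · exact Or.inr (Or.inr ⟨Walk.cons h' q, r, by
          simpa using List.cons_subset_cons a hq, List.Subset.trans hr hsub⟩)

theorem linkedAvoiding_deleteEdge_left {V : Type*} {G : SimpleGraph V} {A B : Set V}
    {x y w : V} (hlink : ∀ v, LinkedAvoiding G A B v)
    (hnot : ¬ LinkedAvoiding (G.deleteEdges {s(x, y)}) A B w)
    (hy : LinkedAvoiding (G.deleteEdges {s(x, y)}) {y} B w) (v : V) :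
    LinkedAvoiding (G.deleteEdges {s(x, y)}) A {w, x} v := by
  classical
  obtain ⟨a, ha, b, hb, p, hp⟩ := hlink v
  rcases walk_deleteEdge_cases x y p with ⟨q, hq⟩ | ⟨q, r, hq, hr⟩ | ⟨q, r, hq, hr⟩
  · by_cases hw : w ∈ q.support
    · exact ⟨a, ha, w, by simp, q.takeUntil w hw,
        fun h => hp (hq (q.support_takeUntil_subset_support hw h))⟩
    · exact (hnot ⟨a, ha, b, hb, q, hw⟩).elim
  · exact ⟨a, ha, x, by simp, q, fun h => hp (hq h)⟩
  · by_cases hw : w ∈ q.support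
    · exact ⟨a, ha, w, by simp, q.takeUntil w hw,
        fun h => hp (hq (q.support_takeUntil_subset_support hw h))⟩
    · obtain ⟨_, rfl, b', hb', p', hp'⟩ := hy
      refine (hnot ⟨a, ha, b', hb', q.append p', ?_⟩).elim
      rw [Walk.mem_support_append_iff]
      tauto

/-- There are two vertex-disjoint paths from `A` to `B`. -/
def TwoLinked {V : Type*} (G : SimpleGraph V) (A B : Set V) : Prop :=
  ∃ a ∈ A, ∃ b ∈ B, ∃ a' ∈ A, ∃ b' ∈ B, ∃ (p : G.Walk a b) (q : G.Walk a' b'),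
    p.IsPath ∧ q.IsPath ∧ p.support.Disjoint q.support

theorem TwoLinked.exists_to_pair {V : Type*} {G : SimpleGraph V} {A : Set V} {w x : V}
    (h : TwoLinked G A {w, x}) :
    ∃ a ∈ A, ∃ a' ∈ A, ∃ (p : G.Walk a w) (q : G.Walk a' x),
      p.IsPath ∧ q.IsPath ∧ p.support.Disjoint q.support := by
  obtain ⟨a, ha, b, hb, a', ha', b', hb', p, q, hp, hq, hd⟩ := h
  have hne : b ≠ b' := fun h => hd p.end_mem_support (h ▸ q.end_mem_support)
  rcases hb with rfl | rfl <;> rcases hb' with rfl | rfl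
  · exact (hne rfl).elim
  · exact ⟨a, ha, a', ha', p, q, hp, hq, hd⟩
  · exact ⟨a', ha', a, ha, q, p, hq, hp, hd.symm⟩
  · exact (hne rfl).elim

theorem not_mem_both_of_not_linkedAvoiding {V : Type*} {G : SimpleGraph V} {A B : Set V}
    {a b y w z : V} (hnot : ¬ LinkedAvoiding G A B w) (ha : a ∈ A) (hb : b ∈ B)
    {p : G.Walk a w} {q : G.Walk b y} (hp : p.IsPath) (hwq : w ∉ q.support)
    (hzp : z ∈ p.support) (hzq : z ∈ q.support) : False := by
  classical
  have hzw : z ≠ w := fun h => hwq (h ▸ hzq)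
  refine hnot ⟨a, ha, b, hb, (p.takeUntil z hzp).append (q.takeUntil z hzq).reverse, ?_⟩
  rw [Walk.mem_support_append_iff, Walk.support_reverse, List.mem_reverse]
  rintro (h | h)
  · exact Walk.endpoint_notMem_support_takeUntil hp hzp hzw.symm h
  · exact hwq (q.support_takeUntil_subset_support hzq h)

theorem twoLinked_of_deleteEdge {V : Type*} {G : SimpleGraph V} {A B : Set V}
    {x y w : V} (hxy : G.Adj x y)
    (hnot : ¬ LinkedAvoiding (G.deleteEdges {s(x, y)}) A B w)
    (hA : TwoLinked (G.deleteEdges {s(x, y)}) A {w, x})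
    (hB : TwoLinked (G.deleteEdges {s(x, y)}) B {w, y}) : TwoLinked G A B := by
  classical
  obtain ⟨a, ha, a', ha', p, p', hp, hp', hpd⟩ := hA.exists_to_pair
  obtain ⟨b, hb, b', hb', q, q', hq, hq', hqd⟩ := hB.exists_to_pair
  have hle : G.deleteEdges {s(x, y)} ≤ G := deleteEdges_le _
  have hwp' : w ∉ p'.support := fun h => hpd p.end_mem_support h
  have hwq' : w ∉ q'.support := fun h => hqd q.end_mem_support h
  set P : G.Walk a b := (p.mapLe hle).append (q.mapLe hle).reverse with hP
  set Q : G.Walk a' b' :=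
    (p'.mapLe hle).append (Walk.cons hxy (q'.mapLe hle).reverse) with hQ
  refine ⟨a, ha, b, hb, a', ha', b', hb', P.bypass, Q.bypass, P.bypass_isPath,
    Q.bypass_isPath, ?_⟩
  intro z hz hz'
  replace hz := P.support_bypass_subset_support hz
  replace hz' := Q.support_bypass_subset_support hz'
  simp only [hP, Walk.mem_support_append_iff, Walk.support_mapLe_eq_support,
    Walk.support_reverse, List.mem_reverse] at hz
  simp only [hQ, Walk.mem_support_append_iff, Walk.support_mapLe_eq_support,
    Walk.support_cons, List.mem_cons, Walk.support_reverse, List.mem_reverse] at hz'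
  have hz'' : z ∈ p'.support ∨ z ∈ q'.support := by
    rcases hz' with h | rfl | h
    · exact Or.inl h
    · exact Or.inl p'.end_mem_support
    · exact Or.inr h
  rcases hz with h | h <;> rcases hz'' with hmem | hmem
  · exact hpd h hmem
  · exact not_mem_both_of_not_linkedAvoiding hnot ha hb' hp hwq' h hmem
  · exact not_mem_both_of_not_linkedAvoiding (fun h => hnot h.symm) hb ha' hq hwp' h hmem
  · exact hqd h hmem

/-- Menger theorem for two paths. -/
theorem twoLinked_of_forall_linkedAvoiding {V : Type*} [Finite V] [Nonempty V]
    (G : SimpleGraph V) (A B : Set V) (h : ∀ w, LinkedAvoiding G A B w) :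
    TwoLinked G A B := by
  classical
  induction hk : G.edgeSet.ncard using Nat.strong_induction_on generalizing G A B with
  | _ k ih =>
  by_cases hG : ∃ x y, G.Adj x y
  · obtain ⟨x, y, hxy⟩ := hG
    set G' := G.deleteEdges {s(x, y)} with hG'
    have hlt : G'.edgeSet.ncard < k := by
      rw [← hk]
      apply Set.ncard_lt_ncard _ (Set.toFinite _)
      rw [hG', edgeSet_deleteEdges]
      refine ⟨Set.sdiff_subset, fun hss => ?_⟩
      have := hss (show s(x, y) ∈ G.edgeSet from hxy)
      simp at this
    have ih' := fun A B hAB => ih _ hlt G' A B hAB rfl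
    by_cases hall : ∀ w, LinkedAvoiding G' A B w
    · obtain ⟨a, ha, b, hb, a', ha', b', hb', p, q, hp, hq, hd⟩ := ih' A B hall
      have hle : G' ≤ G := deleteEdges_le _
      refine ⟨a, ha, b, hb, a', ha', b', hb', p.mapLe hle, q.mapLe hle, ?_, ?_, ?_⟩
      · rwa [Walk.isPath_mapLe]
      · rwa [Walk.isPath_mapLe]
      · simpa [Walk.support_mapLe_eq_support] using hd
    · push Not at hall
      obtain ⟨w, hw⟩ := hall
      have key : ∀ x y, G.Adj x y → G' = G.deleteEdges {s(x, y)} →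
          LinkedAvoiding G' A {x} w → LinkedAvoiding G' {y} B w → TwoLinked G A B := by
        intro x y hxy hG'' hx hy
        have ih'' := ih'
        have hw' := hw
        rw [hG''] at hx hy ih'' hw'
        refine twoLinked_of_deleteEdge hxy hw' (ih'' _ _ ?_) (ih'' _ _ ?_)
        · exact linkedAvoiding_deleteEdge_left h hw' hy
        · have hs : s(x, y) = s(y, x) := Sym2.eq_swap
          rw [hs] at hx hw' ⊢
          exact linkedAvoiding_deleteEdge_left (fun v => (h v).symm)
            (fun h => hw' h.symm) hx.symm
      obtain ⟨a, ha, b, hb, p, hp⟩ := h w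
      rcases walk_deleteEdge_cases x y p with ⟨q, hq⟩ | ⟨q, r, hq, hr⟩ | ⟨q, r, hq, hr⟩
      · exact (hw ⟨a, ha, b, hb, q, fun h => hp (hq h)⟩).elim
      · exact key x y hxy hG' ⟨a, ha, x, rfl, q, fun h => hp (hq h)⟩
          ⟨y, rfl, b, hb, r, fun h => hp (hr h)⟩
      · exact key y x hxy.symm (by rw [hG', Sym2.eq_swap])
          ⟨a, ha, y, rfl, q, fun h => hp (hq h)⟩ ⟨x, rfl, b, hb, r, fun h => hp (hr h)⟩
  · push Not at hG
    have hnil : ∀ {a b : V} (p : G.Walk a b), a = b := by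
      intro a b p
      cases p with
      | nil => rfl
      | cons h _ => exact (hG _ _ h).elim
    obtain ⟨a, ha, b, hb, p, -⟩ := h (Classical.arbitrary V)
    obtain rfl := hnil p
    obtain ⟨a', ha', b', hb', q, hq⟩ := h a
    obtain rfl := hnil q
    refine ⟨a, ha, a, hb, a', ha', a', hb', Walk.nil, Walk.nil, by simp, by simp, ?_⟩
    have : a ≠ a' := fun h => hq (h ▸ q.start_mem_support)
    simpa [eq_comm] using this

theorem List.Nodup.take_append_drop {α : Type*} {l : List α} (h : l.Nodup) {i j : ℕ}
    (hij : i ≤ j) : (l.take i ++ l.drop j).Nodup := by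
  refine h.sublist ?_
  conv_rhs => rw [← List.take_append_drop i l]
  refine List.Sublist.append (List.Sublist.refl _) ?_
  obtain ⟨k, rfl⟩ := Nat.exists_eq_add_of_le hij
  rw [← List.drop_drop]
  exact List.drop_sublist _ _

theorem SimpleGraph.Walk.IsPath.isCycle_append_of_support {V : Type*} {G : SimpleGraph V}
    {x y : V} {p : G.Walk x y} {q : G.Walk y x} (hp : p.IsPath) (hq : q.IsPath)
    (h : ∀ z ∈ p.support, z ∈ q.support → z = x ∨ z = y) (hn : 3 ≤ p.length + q.length) :
    (p.append q).IsCycle := by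
  refine hp.isCycle_append hq ?_ (by omega)
  intro z hz hz'
  have h1 := hp.support_nodup
  rw [← p.cons_tail_support] at h1
  have h2 := hq.support_nodup
  rw [← q.cons_tail_support] at h2
  rcases h z (List.mem_of_mem_tail hz) (List.mem_of_mem_tail hz') with rfl | rfl
  · exact (List.nodup_cons.1 h1).1 hz
  · exact (List.nodup_cons.1 h2).1 hz'

/-- The distance of two positions on a cycle of length `L`. -/
def cycDist (L i j : ℕ) : ℕ := min (max i j - min i j) (L - (max i j - min i j))

theorem SimpleGraph.Walk.IsCycle.exists_arcs {V : Type*} {G : SimpleGraph V} {u : V}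
    {C : G.Walk u u} (hC : C.IsCycle) {k j : ℕ} (hkj : k < j) (hj : j < C.length) :
    ∃ q₁ q₂ : G.Walk (C.getVert k) (C.getVert j), q₁.IsPath ∧ q₂.IsPath ∧
      q₁.length = j - k ∧ q₂.length = C.length - (j - k) ∧
      q₁.support ⊆ C.support ∧ q₂.support ⊆ C.support := by
  have hend : (C.drop k).getVert (j - k) = C.getVert j := by
    rw [Walk.drop_getVert]; congr 1; omega
  refine ⟨((C.drop k).take (j - k)).copy rfl hend,
    ((C.drop j).append (C.take k)).reverse, ?_, ?_, ?_, ?_, ?_, ?_⟩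
  · rw [Walk.isPath_copy]
    rcases Nat.eq_zero_or_pos k with rfl | hk
    · have : (C.take (j - 0)).IsPath := hC.isPath_take (by omega)
      rw [Walk.isPath_def, Walk.support_take, drop_support_eq_support_drop_min]
      rw [Walk.isPath_def, Walk.support_take] at this
      simpa using this
    · exact (hC.isPath_drop hk).take _
  · rw [Walk.isPath_reverse_iff, Walk.isPath_def, Walk.support_append, Walk.support_take,
      Walk.drop_support_eq_support_drop_min, min_eq_left hj.le]
    have h := hC.support_nodup
    have h2 := h.take_append_drop (i := k) (j := j - 1) (by omega)
    rw [List.nodup_append_comm]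
    have htl : (C.support.take (k + 1)).tail = C.support.tail.take k := by
      cases C.support <;> simp
    rw [htl]
    obtain ⟨j', rfl⟩ : ∃ j', j = j' + 1 := ⟨j - 1, by omega⟩
    simpa using h2
  · simp [Walk.drop_length]; omega
  · simp [Walk.drop_length]; omega
  · intro z hz
    simp only [Walk.support_copy, Walk.support_take, drop_support_eq_support_drop_min] at hz
    exact List.mem_of_mem_drop (List.mem_of_mem_take hz)
  · intro z hz
    simp only [Walk.support_reverse, List.mem_reverse, Walk.mem_support_append_iff,
      Walk.support_take, Walk.drop_support_eq_support_drop_min] at hz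
    rcases hz with hz | hz
    · exact List.mem_of_mem_drop hz
    · exact List.mem_of_mem_take hz

theorem SimpleGraph.Walk.IsCycle.exists_long_arc {V : Type*} {G : SimpleGraph V} {u : V}
    {C : G.Walk u u} (hC : C.IsCycle) {i j : ℕ} (hi : i < C.length) (hj : j < C.length)
    (hij : i ≠ j) :
    ∃ q : G.Walk (C.getVert i) (C.getVert j), q.IsPath ∧
      q.length = C.length - cycDist C.length i j ∧ q.support ⊆ C.support := by
  rcases lt_or_gt_of_ne hij with h | h
  · obtain ⟨q₁, q₂, h1, h2, h3, h4, h5, h6⟩ := hC.exists_arcs h hj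
    by_cases hh : j - i ≤ C.length - (j - i)
    · exact ⟨q₂, h2, by rw [h4]; unfold cycDist; omega, h6⟩
    · exact ⟨q₁, h1, by rw [h3]; unfold cycDist; omega, h5⟩
  · obtain ⟨q₁, q₂, h1, h2, h3, h4, h5, h6⟩ := hC.exists_arcs h hi
    by_cases hh : i - j ≤ C.length - (i - j)
    · exact ⟨q₂.reverse, h2.reverse, by rw [Walk.length_reverse, h4]; unfold cycDist; omega,
        by simpa using h6⟩
    · exact ⟨q₁.reverse, h1.reverse, by rw [Walk.length_reverse, h3]; unfold cycDist; omega,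
        by simpa using h5⟩

theorem SimpleGraph.Walk.IsCycle.exists_getVert_of_mem {V : Type*} {G : SimpleGraph V} {u z : V}
    {C : G.Walk u u} (hC : C.IsCycle) (hz : z ∈ C.support) :
    ∃ i < C.length, C.getVert i = z := by
  obtain ⟨n, hn, hnl⟩ := Walk.mem_support_iff_exists_getVert.1 hz
  rcases hnl.lt_or_eq with h | rfl
  · exact ⟨n, h, hn⟩
  · refine ⟨0, by have := hC.three_le_length; omega, ?_⟩
    rw [← hn]; simp

theorem SimpleGraph.Walk.IsCycle.getVert_inj_of_lt {V : Type*} {G : SimpleGraph V} {u : V}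
    {C : G.Walk u u} (hC : C.IsCycle) {i j : ℕ} (hi : i < C.length) (hj : j < C.length)
    (h : C.getVert i = C.getVert j) : i = j :=
  hC.getVert_injOn' (by simp only [Set.mem_ofPred_eq]; omega)
    (by simp only [Set.mem_ofPred_eq]; omega) h

/-- A path avoiding the interior of a cycle that is shortest among the long ones
is not a shortcut. -/
theorem cycDist_le_length_of_internally_disjoint {V : Type*} {G : SimpleGraph V} {u : V}
    {C : G.Walk u u} (hC : C.IsCycle) {N : ℕ} (hN : 3 ≤ N) (hL : 2 * N ≤ C.length + 1)
    (hmin : ∀ (v : V) (D : G.Walk v v), D.IsCycle → N ≤ D.length → C.length ≤ D.length)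
    {i j : ℕ} (hi : i < C.length) (hj : j < C.length) {d : G.Walk (C.getVert i) (C.getVert j)}
    (hd : d.IsPath)
    (hint : ∀ z ∈ d.support, z ∈ C.support → z = C.getVert i ∨ z = C.getVert j) :
    cycDist C.length i j ≤ d.length := by
  by_cases hij : i = j
  · subst hij; simp [cycDist]
  obtain ⟨q, hq, hql, hqs⟩ := hC.exists_long_arc hi hj hij
  by_contra! hlt
  have h2 : 2 * cycDist C.length i j ≤ C.length := by unfold cycDist; omega
  have hcyc : (d.append q.reverse).IsCycle := by
    refine hd.isCycle_append_of_support hq.reverse ?_ ?_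
    · intro z hz hz'
      exact hint z hz (hqs (by simpa using hz'))
    · rw [Walk.length_reverse]; omega
  have := hmin _ _ hcyc (by rw [Walk.length_append, Walk.length_reverse]; omega)
  rw [Walk.length_append, Walk.length_reverse] at this
  omega

theorem cycDist_triangle (L i j k : ℕ) (hi : i < L) (hj : j < L) (hk : k < L) :
    cycDist L i k ≤ cycDist L i j + cycDist L j k := by
  unfold cycDist; omega

theorem cycDist_le_length {V : Type*} {G : SimpleGraph V} {u : V}
    {C : G.Walk u u} (hC : C.IsCycle) {N : ℕ} (hN : 3 ≤ N) (hL : 2 * N ≤ C.length + 1)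
    (hmin : ∀ (v : V) (D : G.Walk v v), D.IsCycle → N ≤ D.length → C.length ≤ D.length)
    {i j : ℕ} (hi : i < C.length) (hj : j < C.length)
    (w : G.Walk (C.getVert i) (C.getVert j)) : cycDist C.length i j ≤ w.length := by
  classical
  suffices H : ∀ n, ∀ i < C.length, ∀ w : G.Walk (C.getVert i) (C.getVert j),
      w.IsPath → w.length = n → cycDist C.length i j ≤ n from
    (H _ i hi w.bypass w.bypass_isPath rfl).trans w.length_bypass_le_length
  intro n
  induction n using Nat.strong_induction_on with
  | _ n ih =>
  intro i hi w hw hwn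
  by_cases hij : i = j
  · subst hij; simp [cycDist]
  have hne : C.getVert i ≠ C.getVert j := fun h => hij (hC.getVert_inj_of_lt hi hj h)
  have hpos : 0 < w.length := by
    rcases Nat.eq_zero_or_pos w.length with h | h
    · exact (hne (Walk.eq_of_length_eq_zero h)).elim
    · exact h
  have hex : ∃ r, 0 < r ∧ r ≤ w.length ∧ w.getVert r ∈ C.support :=
    ⟨w.length, hpos, le_rfl, by rw [Walk.getVert_length]; exact C.getVert_mem_support j⟩
  obtain ⟨hr0, hrl, hrC⟩ := Nat.find_spec hex
  set r := Nat.find hex with hr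
  obtain ⟨k, hk, hkr⟩ := hC.exists_getVert_of_mem hrC
  have h1 : cycDist C.length i k ≤ r := by
    have := cycDist_le_length_of_internally_disjoint hC hN hL hmin hi hk
      (d := (w.take r).copy rfl hkr.symm) (by rw [Walk.isPath_copy]; exact hw.take r) ?_
    · simpa [hrl] using this
    · intro z hz hzC
      rw [Walk.support_copy] at hz
      obtain ⟨s, rfl, hs⟩ := Walk.mem_support_iff_exists_getVert.1 hz
      rw [Walk.take_length] at hs
      rw [Walk.take_getVert] at hzC ⊢
      rcases Nat.eq_zero_or_pos s with rfl | hs0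
      · left; simp
      · by_cases hsr : s = r
        · right; rw [hkr, hsr, min_self]
        · exfalso
          refine Nat.find_min hex (m := s) (by omega) ⟨hs0, by omega, ?_⟩
          rwa [min_eq_right (by omega)] at hzC
  have h2 : cycDist C.length k j ≤ n - r :=
    ih (n - r) (by omega) k hk ((w.drop r).copy hkr.symm rfl)
      (by rw [Walk.isPath_copy]; exact hw.drop r) (by rw [Walk.length_copy, Walk.drop_length, hwn])
  have := cycDist_triangle C.length i k j hi hk hj
  omega

/-- Any two vertices of `F` are joined by a walk inside `F`. -/
def WalkConnected {V : Type*} (G : SimpleGraph V) (F : Set V) : Prop :=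
  ∀ x ∈ F, ∀ y ∈ F, ∃ p : G.Walk x y, ∀ z ∈ p.support, z ∈ F

/-- The vertices that can be reached from `f` inside `D`. -/
def reachWithin {V : Type*} (G : SimpleGraph V) (D : Set V) (f : V) : Set V :=
  {y | ∃ p : G.Walk f y, ∀ z ∈ p.support, z ∈ D}

theorem reachWithin_subset {V : Type*} {G : SimpleGraph V} {D : Set V} {f : V} :
    reachWithin G D f ⊆ D := fun _ ⟨p, hp⟩ => hp _ p.end_mem_support

theorem mem_reachWithin_of_adj {V : Type*} {G : SimpleGraph V} {D : Set V} {f x y : V}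
    (hx : x ∈ reachWithin G D f) (h : G.Adj x y) (hy : y ∈ D) : y ∈ reachWithin G D f := by
  obtain ⟨p, hp⟩ := hx
  refine ⟨p.concat h, fun z hz => ?_⟩
  rw [Walk.support_concat, List.mem_append, List.mem_singleton] at hz
  rcases hz with hz | rfl
  · exact hp z hz
  · exact hy

theorem mem_reachWithin_of_mem_support {V : Type*} {G : SimpleGraph V} {D : Set V} {f y z : V}
    {p : G.Walk f y} (hp : ∀ z ∈ p.support, z ∈ D) (hz : z ∈ p.support) :
    z ∈ reachWithin G D f := by
  classical
  exact ⟨p.takeUntil z hz, fun w hw => hp w (p.support_takeUntil_subset_support hz hw)⟩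

theorem walkConnected_reachWithin {V : Type*} {G : SimpleGraph V} {D : Set V} {f : V} :
    WalkConnected G (reachWithin G D f) := by
  rintro x ⟨p, hp⟩ y ⟨q, hq⟩
  refine ⟨p.reverse.append q, fun z hz => ?_⟩
  rw [Walk.mem_support_append_iff, Walk.support_reverse, List.mem_reverse] at hz
  rcases hz with hz | hz
  · exact mem_reachWithin_of_mem_support hp hz
  · exact mem_reachWithin_of_mem_support hq hz

theorem WalkConnected.subset_reachWithin {V : Type*} {G : SimpleGraph V} {D F : Set V} {f : V}
    (hF : WalkConnected G F) (hf : f ∈ F) (hD : F ⊆ D) : F ⊆ reachWithin G D f := by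
  intro y hy
  obtain ⟨p, hp⟩ := hF f hf y hy
  exact ⟨p, fun z hz => hD (hp z hz)⟩

/-- If `Y` separates `A` from `B`, then the members of a pairwise intersecting family of
connected sets that avoid `Y` all avoid `A` or all avoid `B`. -/
theorem disjoint_or_disjoint_of_separates {V : Type*} {G : SimpleGraph V} {𝓕 : Set (Set V)}
    (hconn : ∀ F ∈ 𝓕, WalkConnected G F) (hint : ∀ F ∈ 𝓕, ∀ F' ∈ 𝓕, (F ∩ F').Nonempty)
    {A B Y : Set V}
    (hsep : ∀ a ∈ A, ∀ b ∈ B, ∀ p : G.Walk a b, ∃ z ∈ p.support, z ∈ Y) :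
    (∀ F ∈ 𝓕, (F ∩ Y).Nonempty ∨ Disjoint F A) ∨
      (∀ F ∈ 𝓕, (F ∩ Y).Nonempty ∨ Disjoint F B) := by
  by_contra! h
  obtain ⟨⟨F, hF, hFY, hFA⟩, ⟨F', hF', hFY', hFB⟩⟩ := h
  obtain ⟨a, haF, haA⟩ := Set.not_disjoint_iff.1 hFA
  obtain ⟨b, hbF, hbB⟩ := Set.not_disjoint_iff.1 hFB
  obtain ⟨c, hcF, hcF'⟩ := hint F hF F' hF'
  obtain ⟨p, hp⟩ := hconn F hF a haF c hcF
  obtain ⟨q, hq⟩ := hconn F' hF' c hcF' b hbF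
  obtain ⟨z, hz, hzY⟩ := hsep a haA b hbB (p.append q)
  rw [Walk.mem_support_append_iff] at hz
  rcases hz with hz | hz
  · exact Set.notMem_empty z (hFY ▸ ⟨hp z hz, hzY⟩)
  · exact Set.notMem_empty z (hFY' ▸ ⟨hq z hz, hzY⟩)

/-- A state of the depth-first search: a path starting in `a`, and a connected
set `K` whose neighbourhood lies on the path, containing some member of `𝓕`. -/
structure SearchState {V : Type*} (G : SimpleGraph V) (𝓕 : Set (Set V)) {a z : V}
    (p : G.Walk a z) (K : Set V) : Prop where
  isPath : p.IsPath
  notMem : ∀ v ∈ p.support, v ∉ K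
  nbr : ∀ x ∈ K, ∀ y, G.Adj x y → y ∈ K ∨ y ∈ p.support
  adj : ∃ x ∈ K, G.Adj a x
  conn : WalkConnected G K
  fam : ∃ F ∈ 𝓕, F ⊆ K

theorem SearchState.exists_transversal_or_smaller {V : Type*} [Finite V] {G : SimpleGraph V}
    {𝓕 : Set (Set V)} (hconn : ∀ F ∈ 𝓕, WalkConnected G F)
    (hint : ∀ F ∈ 𝓕, ∀ F' ∈ 𝓕, (F ∩ F').Nonempty) {N : ℕ} (hN : 2 ≤ N)
    (hcyc : ∀ (v : V) (D : G.Walk v v), D.IsCycle → D.length < N)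
    {a z : V} {p : G.Walk a z} {K : Set V} (h : SearchState G 𝓕 p K) :
    (∃ S : Set V, S.ncard ≤ N ∧ ∀ F ∈ 𝓕, (F ∩ S).Nonempty) ∨
      ∃ (a' : V) (p' : G.Walk a' z) (K' : Set V), SearchState G 𝓕 p' K' ∧ K'.ncard < K.ncard := by
  classical
  obtain ⟨a', ha'K, haa'⟩ := h.adj
  obtain ⟨F₀, hF₀, hF₀K⟩ := h.fam
  set S : Set V := insert a' {v | v ∈ p.support ∧ ∃ x ∈ K, G.Adj v x} with hS
  by_cases hall : ∀ F ∈ 𝓕, (F ∩ S).Nonempty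
  · refine Or.inl ⟨S, ?_, hall⟩
    have hsub : S ⊆ insert a' (p.getVert '' (Finset.range (N - 1) : Set ℕ)) := by
      refine Set.insert_subset_insert ?_
      rintro v ⟨hv, x, hxK, hvx⟩
      obtain ⟨i, rfl, hi⟩ := Walk.mem_support_iff_exists_getVert.1 hv
      refine ⟨i, ?_, rfl⟩
      simp only [Finset.coe_range, Set.mem_Iio]
      by_cases hi0 : i = 0
      · omega
      obtain ⟨q, hq⟩ := h.conn x hxK a' ha'K
      have hqK : ∀ z ∈ q.bypass.support, z ∈ K :=
        fun z hz => hq z (q.support_bypass_subset_support hz)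
      have hvK := h.notMem _ hv
      have haK := h.notMem _ p.start_mem_support
      have hva : p.getVert i ≠ a := by
        intro heq
        exact hi0 (h.isPath.getVert_injOn (by simpa using hi) (by simp) (by simpa using heq))
      have hr1 : (q.bypass.concat haa'.symm).IsPath :=
        q.bypass_isPath.concat (fun hh => haK (hqK _ hh)) _
      have hr2 : (Walk.cons hvx (q.bypass.concat haa'.symm)).IsPath := by
        rw [Walk.cons_isPath_iff]
        refine ⟨hr1, ?_⟩
        rw [Walk.support_concat, List.mem_append, List.mem_singleton]
        rintro (hh | hh)
        · exact hvK (hqK _ hh)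
        · exact hva hh
      have hc := (h.isPath.take i).isCycle_append_of_support hr2 (by
        intro w hw hw'
        have hwp : w ∉ K := h.notMem w (by
          rw [Walk.support_take] at hw; exact List.mem_of_mem_take hw)
        rw [Walk.support_cons, Walk.support_concat, List.mem_cons, List.mem_append,
          List.mem_singleton] at hw'
        rcases hw' with hh | hh | hh
        · exact Or.inr hh
        · exact (hwp (hqK _ hh)).elim
        · exact Or.inl hh) (by
        rw [Walk.take_length, Walk.length_cons, Walk.length_concat]; omega)
      have := hcyc _ _ hc
      rw [Walk.length_append, Walk.take_length, Walk.length_cons, Walk.length_concat] at this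
      omega
    calc S.ncard ≤ (insert a' (p.getVert '' (Finset.range (N - 1) : Set ℕ))).ncard :=
          Set.ncard_le_ncard hsub (Set.toFinite _)
      _ ≤ (p.getVert '' (Finset.range (N - 1) : Set ℕ)).ncard + 1 := Set.ncard_insert_le _ _
      _ ≤ (Finset.range (N - 1) : Set ℕ).ncard + 1 := by
          gcongr; exact Set.ncard_image_le (Finset.finite_toSet _)
      _ = N := by rw [Set.ncard_coe_finset, Finset.card_range]; omega
  · right
    push Not at hall
    obtain ⟨F, hF, hFS⟩ := hall
    obtain ⟨f, hfF, hfF₀⟩ := hint F hF F₀ hF₀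
    have hfK := hF₀K hfF₀
    have hFD : F ⊆ K \ {a'} := by
      intro y hy
      refine ⟨?_, fun hya => Set.notMem_empty y (hFS ▸ ⟨hy, Or.inl hya⟩)⟩
      by_contra hyK
      obtain ⟨q, hq⟩ := hconn F hF f hfF y hy
      obtain ⟨d, hd, hd1, hd2⟩ := q.exists_boundary_dart K hfK hyK
      have hd' := (h.nbr _ hd1 _ d.adj).resolve_left hd2
      exact Set.notMem_empty d.snd
        (hFS ▸ ⟨hq _ (q.dart_snd_mem_support_of_mem_darts hd),
          Or.inr ⟨hd', d.fst, hd1, d.adj.symm⟩⟩)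
    have ha'p : a' ∉ p.support := fun hh => h.notMem _ hh ha'K
    have hK'K : reachWithin G (K \ {a'}) f ⊆ K \ {a'} := reachWithin_subset
    have hFK' := (hconn F hF).subset_reachWithin hfF hFD
    refine ⟨a', Walk.cons haa'.symm p, reachWithin G (K \ {a'}) f,
      ⟨?_, ?_, ?_, ?_, walkConnected_reachWithin, F, hF, hFK'⟩, ?_⟩
    · exact (Walk.cons_isPath_iff _ _).2 ⟨h.isPath, ha'p⟩
    · intro v hv hvK
      rw [Walk.support_cons, List.mem_cons] at hv
      rcases hv with rfl | hv
      · exact (hK'K hvK).2 rfl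
      · exact h.notMem v hv (hK'K hvK).1
    · intro x hx y hxy
      rw [Walk.support_cons, List.mem_cons]
      rcases h.nbr x (hK'K hx).1 y hxy with hy | hy
      · by_cases hya : y = a'
        · exact Or.inr (Or.inl hya)
        · exact Or.inl (mem_reachWithin_of_adj hx hxy ⟨hy, hya⟩)
      · exact Or.inr (Or.inr hy)
    · obtain ⟨q, hq⟩ := h.conn f hfK a' ha'K
      obtain ⟨d, hd, hd1, hd2⟩ := q.exists_boundary_dart (reachWithin G (K \ {a'}) f)
        (hFK' hfF) (fun hh => (hK'K hh).2 rfl)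
      have : d.snd = a' := by
        by_contra hne
        exact hd2 (mem_reachWithin_of_adj hd1 d.adj
          ⟨hq _ (q.dart_snd_mem_support_of_mem_darts hd), hne⟩)
      exact ⟨d.fst, hd1, this ▸ d.adj.symm⟩
    · refine Set.ncard_lt_ncard ⟨fun x hx => (hK'K hx).1, fun hh => ?_⟩ (Set.toFinite _)
      exact (hK'K (hh ha'K)).2 rfl

/-- If there are no long cycles, then a pairwise intersecting family of connected sets has a
small transversal. -/
theorem exists_transversal_of_no_long_cycle {V : Type*} [Finite V] {G : SimpleGraph V}
    {𝓕 : Set (Set V)} (hconn : ∀ F ∈ 𝓕, WalkConnected G F)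
    (hint : ∀ F ∈ 𝓕, ∀ F' ∈ 𝓕, (F ∩ F').Nonempty) {N : ℕ} (hN : 2 ≤ N)
    (hcyc : ∀ (v : V) (D : G.Walk v v), D.IsCycle → D.length < N) :
    ∃ S : Set V, S.ncard ≤ N ∧ ∀ F ∈ 𝓕, (F ∩ S).Nonempty := by
  have key : ∀ k, ∀ (a z : V) (p : G.Walk a z) (K : Set V), SearchState G 𝓕 p K → K.ncard = k →
      ∃ S : Set V, S.ncard ≤ N ∧ ∀ F ∈ 𝓕, (F ∩ S).Nonempty := by
    intro k
    induction k using Nat.strong_induction_on with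
    | _ k ih =>
    intro a z p K h hk
    rcases h.exists_transversal_or_smaller hconn hint hN hcyc with hS | ⟨a', p', K', h', hlt⟩
    · exact hS
    · exact ih _ (hk ▸ hlt) a' z p' K' h' rfl
  rcases 𝓕.eq_empty_or_nonempty with rfl | ⟨Q, hQ⟩
  · exact ⟨∅, by simp, by simp⟩
  obtain ⟨v, hvQ, -⟩ := hint Q hQ Q hQ
  by_cases hall : ∀ F ∈ 𝓕, (F ∩ {v}).Nonempty
  · exact ⟨{v}, by rw [Set.ncard_singleton]; omega, hall⟩
  push Not at hall
  obtain ⟨F, hF, hFv⟩ := hall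
  obtain ⟨f, hfF, hfQ⟩ := hint F hF Q hQ
  have hFD : F ⊆ {v}ᶜ := fun y hy hyv => Set.notMem_empty y (hFv ▸ ⟨hy, hyv⟩)
  have hFK := (hconn F hF).subset_reachWithin hfF hFD
  have hK : reachWithin G {v}ᶜ f ⊆ {v}ᶜ := reachWithin_subset
  refine key _ v v Walk.nil (reachWithin G {v}ᶜ f)
    ⟨Walk.IsPath.nil, ?_, ?_, ?_, walkConnected_reachWithin, F, hF, hFK⟩ rfl
  · intro w hw hwK
    rw [Walk.support_nil, List.mem_singleton] at hw
    exact hK hwK hw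
  · intro x hx y hxy
    by_cases hy : y = v
    · exact Or.inr (by simp [hy])
    · exact Or.inl (mem_reachWithin_of_adj hx hxy hy)
  · obtain ⟨q, hq⟩ := hconn Q hQ f hfQ v hvQ
    obtain ⟨d, hd, hd1, hd2⟩ := q.exists_boundary_dart (reachWithin G {v}ᶜ f)
      (hFK hfF) (fun hh => hK hh rfl)
    have : d.snd = v := by
      by_contra hne
      exact hd2 (mem_reachWithin_of_adj hd1 d.adj hne)
    exact ⟨d.fst, hd1, this ▸ d.adj.symm⟩

/-- A nonempty set `A` of non-isolated vertices of `G` together with a set `Y`, smaller by a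
factor of `t`, that meets each member of `𝓕` meeting `A`. -/
def HasCheapSeparator {V : Type*} (G : SimpleGraph V) (𝓕 : Set (Set V)) (t : ℝ) : Prop :=
  ∃ A Y : Set V, A.Nonempty ∧ (∀ a ∈ A, ∃ b, G.Adj a b) ∧ t * Y.ncard ≤ A.ncard ∧
    ∀ F ∈ 𝓕, (F ∩ Y).Nonempty ∨ Disjoint F A

theorem exists_mem_support_dist_eq {V : Type*} {G : SimpleGraph V} {u a b : V} {i : ℕ}
    (p : G.Walk a b) (hr : G.Reachable u a) (ha : G.dist u a ≤ i) (hb : i ≤ G.dist u b) :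
    ∃ z ∈ p.support, G.dist u z = i := by
  induction p with
  | nil => exact ⟨_, Walk.start_mem_support _, by omega⟩
  | @cons a c b h p ih =>
    rcases ha.eq_or_lt with ha | ha
    · exact ⟨a, Walk.start_mem_support _, ha⟩
    · obtain ⟨q, hq⟩ := hr.exists_walk_length_eq_dist
      have hc : G.dist u c ≤ i := by
        have := dist_le (q.concat h)
        rw [Walk.length_concat] at this
        omega
      obtain ⟨z, hz, hzi⟩ := ih (hr.trans h.reachable) hc hb
      exact ⟨z, by rw [Walk.support_cons]; exact List.mem_cons_of_mem _ hz, hzi⟩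

theorem SimpleGraph.Walk.IsCycle.exists_adj_of_mem {V : Type*} {G : SimpleGraph V} {u a : V}
    {C : G.Walk u u} (hC : C.IsCycle) (ha : a ∈ C.support) : ∃ b, G.Adj a b := by
  obtain ⟨i, hi, rfl⟩ := hC.exists_getVert_of_mem ha
  exact ⟨_, C.adj_getVert_succ hi⟩

theorem hasCheapSeparator_of_long_cycle {V : Type*} [Fintype V] {G : SimpleGraph V}
    {𝓕 : Set (Set V)} (hconn : ∀ F ∈ 𝓕, WalkConnected G F)
    (hint : ∀ F ∈ 𝓕, ∀ F' ∈ 𝓕, (F ∩ F').Nonempty) {t : ℝ} (ht : 5 ≤ t)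
    (hn : t ^ 3 = Fintype.card V) {u : V} {C : G.Walk u u} (hC : C.IsCycle)
    (hmin : ∀ (v : V) (D : G.Walk v v), D.IsCycle → ⌈2 * t ^ 2⌉₊ ≤ D.length →
      C.length ≤ D.length)
    (hL : 4 * t ^ 2 < C.length) : HasCheapSeparator G 𝓕 t := by
  classical
  set L := C.length with hLdef
  have ht2 : 25 ≤ t ^ 2 := by nlinarith
  have hN3 : 3 ≤ ⌈2 * t ^ 2⌉₊ := by
    have : ((2 : ℕ) : ℝ) < 2 * t ^ 2 := by push_cast; linarith
    exact Nat.lt_ceil.2 this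
  have hN2 : 2 * ⌈2 * t ^ 2⌉₊ ≤ L + 1 := by
    have h1 : ⌈2 * t ^ 2⌉₊ ≤ (L + 1) / 2 := by
      refine Nat.ceil_le.2 ?_
      have h2 : L ≤ 2 * ((L + 1) / 2) := by omega
      have h3 : (L : ℝ) ≤ 2 * (((L + 1) / 2 : ℕ) : ℝ) := by exact_mod_cast h2
      linarith
    omega
  have hdistlow : ∀ i < L, cycDist L 0 i ≤ G.dist u (C.getVert i) := by
    intro i hi
    obtain ⟨q, hq⟩ := (C.take i).reachable.exists_walk_length_eq_dist
    have := cycDist_le_length hC hN3 hN2 hmin (i := 0) (by omega) hi (q.copy (by simp) rfl)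
    rwa [Walk.length_copy, hq] at this
  have hdistup : ∀ i < L, G.dist u (C.getVert i) ≤ cycDist L 0 i := by
    intro i hi
    have h1 := dist_le (C.take i)
    have h2 := dist_le (C.drop i).reverse
    rw [Walk.take_length] at h1
    rw [Walk.length_reverse, Walk.drop_length] at h2
    unfold cycDist
    omega
  set k := ⌈t ^ 2⌉₊ with hk
  set r := ⌈(t ^ 2 - 1) / 2⌉₊ with hr
  have hkl : t ^ 2 ≤ k := Nat.le_ceil _
  have hku : (k : ℝ) < t ^ 2 + 1 := Nat.ceil_lt_add_one (by linarith)
  have hrl : (t ^ 2 - 1) / 2 ≤ r := Nat.le_ceil _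
  have hru : (r : ℝ) < (t ^ 2 - 1) / 2 + 1 := Nat.ceil_lt_add_one (by linarith)
  have hk0 : 0 < k := by
    have : (0 : ℝ) < k := by linarith
    exact_mod_cast this
  have hrk : 2 * (r + k) ≤ L + 1 := by
    have : (2 * (r + k) : ℝ) ≤ L + 1 := by linarith
    exact_mod_cast this
  obtain ⟨i, hi, hil⟩ : ∃ i ∈ Finset.Ico r (r + k),
      (((Finset.univ.filter fun z => G.dist u z = i).card : ℕ) : ℝ) ≤ t := by
    refine Finset.exists_card_fiber_le_of_card_le_nsmul ⟨r, by simp [hk0]⟩ ?_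
    rw [Nat.card_Ico, Finset.card_univ, ← hn, nsmul_eq_mul, Nat.add_sub_cancel_left]
    nlinarith
  rw [Finset.mem_Ico] at hi
  set Y : Set V := {z | G.dist u z = i} with hY
  have hYt : (Y.ncard : ℝ) ≤ t := by
    rwa [hY, ← Finset.coe_filter_univ, Set.ncard_coe_finset]
  have hYT : t * Y.ncard ≤ t ^ 2 := by nlinarith
  set A : Set V := C.getVert '' (Finset.range (r + 1) ∪ Finset.Ico (L - r) L : Finset ℕ) with hA
  set B : Set V := C.getVert '' (Finset.Icc (r + k - 1) (L - (r + k - 1)) : Finset ℕ) with hB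
  have hAC : ∀ a ∈ A, a ∈ C.support := by
    rintro _ ⟨j, -, rfl⟩; exact C.getVert_mem_support j
  have hBC : ∀ a ∈ B, a ∈ C.support := by
    rintro _ ⟨j, -, rfl⟩; exact C.getVert_mem_support j
  have hcardA : t ^ 2 ≤ A.ncard := by
    rw [hA, Set.InjOn.ncard_image, Set.ncard_coe_finset, Finset.card_union_of_disjoint,
      Finset.card_range, Nat.card_Ico]
    · have : L - (L - r) = r := by omega
      rw [this]; push_cast; linarith
    · rw [Finset.disjoint_left]
      intro j hj hj'
      rw [Finset.mem_range] at hj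
      rw [Finset.mem_Ico] at hj'
      omega
    · intro j hj j' hj' hjj
      simp only [Finset.coe_union, Finset.coe_range, Finset.coe_Ico, Set.mem_union,
        Set.mem_Iio, Set.mem_Ico] at hj hj'
      exact hC.getVert_inj_of_lt (by omega) (by omega) hjj
  have hcardB : t ^ 2 ≤ B.ncard := by
    rw [hB, Set.InjOn.ncard_image, Set.ncard_coe_finset, Nat.card_Icc]
    · obtain ⟨c, hc⟩ : ∃ c, c = L - (r + k - 1) + 1 - (r + k - 1) := ⟨_, rfl⟩
      have hc' : c + 2 * (r + k) = L + 3 := by omega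
      have hc'' : (c + 2 * (r + k) : ℝ) = L + 3 := by exact_mod_cast hc'
      rw [← hc]
      linarith
    · intro j hj j' hj' hjj
      simp only [Finset.coe_Icc, Set.mem_Icc] at hj hj'
      by_cases hr0 : r + k - 1 = 0
      · exfalso
        have : (r + k : ℝ) ≤ 1 := by exact_mod_cast (by omega : r + k ≤ 1)
        have : (0 : ℝ) ≤ r := Nat.cast_nonneg _
        linarith
      · exact hC.getVert_inj_of_lt (by omega) (by omega) hjj
  have hsep : ∀ a ∈ A, ∀ b ∈ B, ∀ p : G.Walk a b, ∃ z ∈ p.support, z ∈ Y := by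
    rintro _ ⟨j, hj, rfl⟩ _ ⟨j', hj', rfl⟩ p
    simp only [Finset.coe_union, Finset.coe_range, Finset.coe_Ico, Set.mem_union,
      Set.mem_Iio, Set.mem_Ico] at hj
    simp only [Finset.coe_Icc, Set.mem_Icc] at hj'
    have hjL : j < L := by omega
    refine exists_mem_support_dist_eq p (C.take j).reachable ?_ ?_
    · have := hdistup j hjL
      unfold cycDist at this
      omega
    · rcases Nat.lt_or_ge j' L with hj'L | hj'L
      · have := hdistlow j' hj'L
        unfold cycDist at this
        omega
      · have : (1 : ℝ) ≤ k := by exact_mod_cast hk0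
        exfalso
        have : r + k ≤ 1 := by omega
        have : (r + k : ℝ) ≤ 1 := by exact_mod_cast this
        have : (0 : ℝ) ≤ r := Nat.cast_nonneg _
        linarith
  have hne : ∀ D : Set V, t ^ 2 ≤ D.ncard → D.Nonempty := by
    intro D hD
    rw [Set.nonempty_iff_ne_empty]
    rintro rfl
    rw [Set.ncard_empty] at hD
    push_cast at hD
    linarith
  rcases disjoint_or_disjoint_of_separates hconn hint hsep with h | h
  · exact ⟨A, Y, hne A hcardA, fun a ha => hC.exists_adj_of_mem (hAC a ha),
      hYT.trans hcardA, h⟩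
  · exact ⟨B, Y, hne B hcardB, fun a ha => hC.exists_adj_of_mem (hBC a ha),
      hYT.trans hcardB, h⟩

theorem SimpleGraph.Walk.IsPath.append_of_support {V : Type*} {G : SimpleGraph V} {x y z : V}
    {p : G.Walk x y} {q : G.Walk y z} (hp : p.IsPath) (hq : q.IsPath)
    (h : ∀ w ∈ p.support, w ∈ q.support → w = y) : (p.append q).IsPath := by
  rw [Walk.isPath_def, Walk.support_append, List.nodup_append']
  refine ⟨hp.support_nodup, hq.support_nodup.tail, ?_⟩
  intro w hw hw'
  have h2 := hq.support_nodup
  rw [← q.cons_tail_support] at h2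
  obtain rfl := h w hw (List.mem_of_mem_tail hw')
  exact (List.nodup_cons.1 h2).1 hw'

/-- The graph `G` with all vertices of `D` made isolated. -/
def isolate {V : Type*} (G : SimpleGraph V) (D : Set V) : SimpleGraph V where
  Adj x y := G.Adj x y ∧ x ∉ D ∧ y ∉ D
  symm := ⟨fun _ _ h => ⟨h.1.symm, h.2.2, h.2.1⟩⟩
  loopless := ⟨fun _ h => h.1.ne rfl⟩

theorem isolate_le {V : Type*} (G : SimpleGraph V) (D : Set V) : isolate G D ≤ G :=
  fun _ _ h => h.1

theorem exists_walk_isolate {V : Type*} {G : SimpleGraph V} {D : Set V} {a b : V}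
    (p : G.Walk a b) (hp : ∀ z ∈ p.support, z ∉ D) :
    ∃ q : (isolate G D).Walk a b, q.support = p.support := by
  refine ⟨p.transfer _ ?_, Walk.support_transfer _ _⟩
  intro e he
  induction e with
  | _ x y =>
  exact ⟨p.adj_of_mem_edges he, hp _ (p.fst_mem_support_of_mem_edges he),
    hp _ (p.snd_mem_support_of_mem_edges he)⟩

theorem notMem_of_mem_support_isolate {V : Type*} {G : SimpleGraph V} {D : Set V} {a b z : V}
    (p : (isolate G D).Walk a b) (ha : a ∉ D) (hz : z ∈ p.support) : z ∉ D := by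
  induction p with
  | nil => simpa [List.mem_singleton.1 hz] using ha
  | cons h p ih =>
    rw [Walk.support_cons, List.mem_cons] at hz
    rcases hz with rfl | hz
    · exact ha
    · exact ih h.2.2 hz

theorem exists_trimmed_path {V : Type*} {G : SimpleGraph V} {A B : Set V} {a b : V}
    (p : G.Walk a b) (ha : a ∈ A) (hb : b ∈ B) :
    ∃ a' ∈ A, ∃ b' ∈ B, ∃ q : G.Walk a' b', q.IsPath ∧ q.support ⊆ p.support ∧
      (∀ z ∈ q.support, z ∈ A → z = a') ∧ (∀ z ∈ q.support, z ∈ B → z = b') := by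
  classical
  have hex : ∃ n, ∃ a' ∈ A, ∃ b' ∈ B, ∃ q : G.Walk a' b', q.support ⊆ p.support ∧
      q.length = n := ⟨_, a, ha, b, hb, p, List.Subset.refl _, rfl⟩
  obtain ⟨a', ha', b', hb', q, hq, hqn⟩ := Nat.find_spec hex
  have hmin : ∀ a'' ∈ A, ∀ b'' ∈ B, ∀ r : G.Walk a'' b'', r.support ⊆ q.support →
      q.length ≤ r.length := by
    intro a'' ha'' b'' hb'' r hr
    rw [hqn]
    exact Nat.find_min' hex ⟨a'', ha'', b'', hb'', r, List.Subset.trans hr hq, rfl⟩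
  have hsub := q.support_bypass_subset_support
  have hlen := q.length_bypass_le_length
  refine ⟨a', ha', b', hb', q.bypass, q.bypass_isPath, List.Subset.trans hsub hq, ?_, ?_⟩
  · intro z hz hzA
    by_contra hne
    have h1 := hmin z hzA b' hb' (q.bypass.dropUntil z hz)
      (List.Subset.trans (q.bypass.support_dropUntil_subset_support hz) hsub)
    have := q.bypass.length_dropUntil_lt_length hz hne
    omega
  · intro z hz hzB
    by_contra hne
    have h1 := hmin a' ha' z hzB (q.bypass.takeUntil z hz)
      (List.Subset.trans (q.bypass.support_takeUntil_subset_support hz) hsub)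
    have := q.bypass.length_takeUntil_lt_length hz hne
    omega

/-- Any path of `G` that leaves `R` in between its two ends in `β` is shorter than `B`. -/
def HasShortDetours {V : Type*} (G : SimpleGraph V) (R β : Set V) (B : ℕ) : Prop :=
  ∀ x ∈ β, ∀ y ∈ β, x ≠ y → ∀ d : G.Walk x y, d.IsPath →
    (∀ z ∈ d.support, z ∈ R → z = x ∨ z = y) → d.length < B

theorem exists_vertex_separating_cycle {V : Type*} [Finite V] {G : SimpleGraph V} {u : V}
    {C : G.Walk u u} (hC : C.IsCycle) {R β : Set V} {B : ℕ} (hβ : HasShortDetours G R β B)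
    (hCR : ∀ z ∈ C.support, z ∉ R) (hB : 2 * B ≤ C.length + 1) :
    ∃ v, ∀ a ∈ C.support, ∀ b ∈ β, ∀ p : G.Walk a b,
      (∀ z ∈ p.support, z ∈ R → z ∈ β) → v ∈ p.support := by
  by_contra! hcon
  have : Nonempty V := ⟨u⟩
  have hlink : ∀ w, LinkedAvoiding (isolate G (R \ β)) {z | z ∈ C.support} β w := by
    intro w
    obtain ⟨a, ha, b, hb, p, hp, hw⟩ := hcon w
    obtain ⟨q, hq⟩ := exists_walk_isolate (D := R \ β) p (fun z hz hzD => hzD.2 (hp z hz hzD.1))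
    exact ⟨a, ha, b, hb, q, by rwa [hq]⟩
  obtain ⟨a, ha, b, hb, a', ha', b', hb', p, p', -, -, hd⟩ :=
    twoLinked_of_forall_linkedAvoiding _ _ _ hlink
  have key : ∀ a b, a ∈ C.support → b ∈ β → ∀ p : (isolate G (R \ β)).Walk a b,
      ∃ i < C.length, ∃ y ∈ β, ∃ q : G.Walk (C.getVert i) y, q.IsPath ∧
        q.support ⊆ p.support ∧ (∀ z ∈ q.support, z ∈ C.support → z = C.getVert i) ∧
        (∀ z ∈ q.support, z ∈ R → z = y) := by
    intro a b ha hb p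
    obtain ⟨x, hx, y, hy, q, hq, hqs, hqx, hqy⟩ :=
      exists_trimmed_path (A := {z | z ∈ C.support}) (B := β) p ha hb
    obtain ⟨i, hi, rfl⟩ := hC.exists_getVert_of_mem hx
    refine ⟨i, hi, y, hy, q.mapLe (isolate_le _ _), by rwa [Walk.isPath_mapLe], ?_, ?_, ?_⟩
    · rwa [Walk.support_mapLe_eq_support]
    · rwa [Walk.support_mapLe_eq_support]
    · rw [Walk.support_mapLe_eq_support]
      intro z hz hzR
      refine hqy z hz ?_
      by_contra hzβ
      exact notMem_of_mem_support_isolate p (fun h => hCR a ha h.1) (hqs hz) ⟨hzR, hzβ⟩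
  obtain ⟨i, hi, y, hy, q, hq, hqs, hqC, hqR⟩ := key a b ha hb p
  obtain ⟨j, hj, y', hy', q', hq', hqs', hqC', hqR'⟩ := key a' b' ha' hb' p'
  have hdq : ∀ z ∈ q.support, z ∉ q'.support := fun z hz hz' => hd (hqs hz) (hqs' hz')
  have hij : i ≠ j := by
    rintro rfl
    exact hdq _ q.start_mem_support q'.start_mem_support
  have hyy' : y ≠ y' := by
    rintro rfl
    exact hdq _ q.end_mem_support q'.end_mem_support
  obtain ⟨c, hc, hcl, hcs⟩ := hC.exists_long_arc hi hj hij
  have h1 : (c.append q').IsPath := hc.append_of_support hq' fun w hw hw' => hqC' w hw' (hcs hw)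
  have h2 : (q.reverse.append (c.append q')).IsPath := by
    refine hq.reverse.append_of_support h1 fun w hw hw' => ?_
    rw [Walk.support_reverse, List.mem_reverse] at hw
    rw [Walk.mem_support_append_iff] at hw'
    rcases hw' with hw' | hw'
    · exact hqC w hw (hcs hw')
    · exact (hdq w hw hw').elim
  have h3 := hβ y hy y' hy' hyy' _ h2 (by
    intro z hz hzR
    rw [Walk.mem_support_append_iff, Walk.mem_support_append_iff, Walk.support_reverse,
      List.mem_reverse] at hz
    rcases hz with hz | hz | hz
    · exact Or.inl (hqR z hz hzR)
    · exact (hCR z (hcs hz) hzR).elim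
    · exact Or.inr (hqR' z hz hzR))
  rw [Walk.length_append, Walk.length_append] at h3
  unfold cycDist at hcl
  omega

/-- For every `B`, the set `R` is covered by few pieces having only detours shorter
than `B`. -/
def HasDetourCover {V : Type*} (G : SimpleGraph V) (n m : ℕ) (R : Set V) : Prop :=
  ∀ B, 2 ≤ B → ∃ 𝓑 : Finset (Set V), 𝓑.card * B ≤ n + m + (m + 1) * B ∧
    (∀ x ∈ R, ∃ β ∈ 𝓑, x ∈ β) ∧ ∀ β ∈ 𝓑, HasShortDetours G R β B

theorem exists_small_separator_of_cycle {V : Type*} [Finite V] {G : SimpleGraph V}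
    {n m : ℕ} {u : V} {C : G.Walk u u} (hC : C.IsCycle) {R : Set V}
    (hR : HasDetourCover G n m R) (hCR : ∀ z ∈ C.support, z ∉ R) :
    ∃ Y : Set V, Y.ncard * ((C.length + 1) / 2) ≤ n + m + (m + 1) * ((C.length + 1) / 2) ∧
      ∀ a ∈ C.support, ∀ b ∈ R, ∀ p : G.Walk a b, ∃ z ∈ p.support, z ∈ Y := by
  classical
  have := Fintype.ofFinite V
  have h3 := hC.three_le_length
  obtain ⟨𝓑, hcard, hcover, h𝓑⟩ := hR ((C.length + 1) / 2) (by omega)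
  have hv : ∀ β : 𝓑, ∃ v, ∀ a ∈ C.support, ∀ b ∈ β.1, ∀ p : G.Walk a b,
      (∀ z ∈ p.support, z ∈ R → z ∈ β.1) → v ∈ p.support := fun β =>
    exists_vertex_separating_cycle hC (h𝓑 β.1 β.2) hCR (by omega)
  choose v hv using hv
  refine ⟨Set.range v, ?_, ?_⟩
  · refine le_trans (Nat.mul_le_mul_right _ ?_) hcard
    rw [← Set.image_univ]
    refine (Set.ncard_image_le (Set.toFinite _)).trans ?_
    simp [Set.ncard_univ]
  · intro a ha b hb p
    obtain ⟨x, hxR, hx, hfirst⟩ := p.exists_mem_support_forall_mem_support_imp_eq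
      (s := R.toFinset) ⟨b, by simp [hb]⟩
    rw [Set.mem_toFinset] at hxR
    obtain ⟨β, hβ, hxβ⟩ := hcover x hxR
    refine ⟨v ⟨β, hβ⟩, ?_, Set.mem_range_self _⟩
    refine p.support_takeUntil_subset_support hx (hv ⟨β, hβ⟩ a ha x hxβ (p.takeUntil x hx) ?_)
    intro z hz hzR
    rw [hfirst z (Set.mem_toFinset.2 hzR) hz]
    exact hxβ

theorem small_transversal_or_hasCheapSeparator {V : Type*} [Fintype V] {G : SimpleGraph V}
    {𝓕 : Set (Set V)} (hconn : ∀ F ∈ 𝓕, WalkConnected G F)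
    (hint : ∀ F ∈ 𝓕, ∀ F' ∈ 𝓕, (F ∩ F').Nonempty) {t : ℝ} (ht : 5 ≤ t)
    (hn : t ^ 3 = Fintype.card V) {m : ℕ} (hm : (m : ℝ) ^ 2 ≤ t)
    (hdet : ∀ R ∈ 𝓕, HasDetourCover G (Fintype.card V) m R) :
    (∃ S : Set V, (S.ncard : ℝ) ≤ 4 * t ^ 2 ∧ ∀ F ∈ 𝓕, (F ∩ S).Nonempty) ∨
      HasCheapSeparator G 𝓕 t := by
  classical
  set N := ⌈2 * t ^ 2⌉₊ with hN
  have ht2 : 5 * t ≤ t ^ 2 := by nlinarith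
  have hNl : 2 * t ^ 2 ≤ N := Nat.le_ceil _
  have hNu : (N : ℝ) < 2 * t ^ 2 + 1 := Nat.ceil_lt_add_one (by linarith)
  by_cases hcyc : ∃ L, ∃ (v : V) (D : G.Walk v v), D.IsCycle ∧ N ≤ D.length ∧ D.length = L
  swap
  · push Not at hcyc
    have hN2 : 2 ≤ N := by
      have : ((2 : ℕ) : ℝ) ≤ N := by push_cast; linarith
      exact_mod_cast this
    obtain ⟨S, hS, hS'⟩ := exists_transversal_of_no_long_cycle hconn hint hN2 (by
      intro v D hD
      by_contra! h
      exact hcyc _ v D hD h rfl)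
    refine Or.inl ⟨S, ?_, hS'⟩
    have : (S.ncard : ℝ) ≤ N := by exact_mod_cast hS
    linarith
  obtain ⟨u, C, hC, hCN, hCL⟩ := Nat.find_spec hcyc
  have hmin : ∀ (v : V) (D : G.Walk v v), D.IsCycle → N ≤ D.length → C.length ≤ D.length := by
    intro v D hD hDN
    rw [hCL]
    exact Nat.find_min' hcyc ⟨v, D, hD, hDN, rfl⟩
  rcases lt_or_ge (4 * t ^ 2) (C.length : ℝ) with hL | hL
  · exact Or.inr (hasCheapSeparator_of_long_cycle hconn hint ht hn hC hmin hL)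
  have hcardC : {z | z ∈ C.support}.ncard = C.length := by
    have : {z | z ∈ C.support} = C.getVert '' (Finset.range C.length : Set ℕ) := by
      ext z
      simp only [Set.mem_ofPred_eq, Set.mem_image, Finset.coe_range, Set.mem_Iio]
      constructor
      · exact fun hz => hC.exists_getVert_of_mem hz
      · rintro ⟨i, -, rfl⟩; exact C.getVert_mem_support i
    rw [this, Set.InjOn.ncard_image, Set.ncard_coe_finset, Finset.card_range]
    intro i hi j hj hij
    simp only [Finset.coe_range, Set.mem_Iio] at hi hj
    exact hC.getVert_inj_of_lt hi hj hij
  by_cases hall : ∀ F ∈ 𝓕, (F ∩ {z | z ∈ C.support}).Nonempty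
  · exact Or.inl ⟨_, by rwa [hcardC], hall⟩
  push Not at hall
  obtain ⟨R, hR, hRC⟩ := hall
  obtain ⟨Y, hYcard, hsep⟩ := exists_small_separator_of_cycle hC (hdet R hR)
    (fun z hz hzR => Set.notMem_empty z (hRC ▸ ⟨hzR, hz⟩))
  have hY2t : (Y.ncard : ℝ) ≤ 2 * t := by
    obtain ⟨B, hB⟩ : ∃ B, B = (C.length + 1) / 2 := ⟨_, rfl⟩
    rw [← hB] at hYcard
    have hB2 : C.length ≤ 2 * B := by omega
    have hB2' : (C.length : ℝ) ≤ 2 * B := by exact_mod_cast hB2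
    have hCN' : (N : ℝ) ≤ C.length := by exact_mod_cast hCN
    have hBT : t ^ 2 ≤ B := by linarith
    have hYcard' : (Y.ncard * B : ℝ) ≤ t ^ 3 + m + (m + 1) * B := by
      rw [hn]; exact_mod_cast hYcard
    have hm2 : (m : ℝ) + 2 ≤ t := by
      by_contra! h
      have h4 : (m : ℝ) < 2 := by nlinarith
      linarith [(Nat.cast_nonneg m : (0 : ℝ) ≤ m)]
    have hB0 : (0 : ℝ) < B := by nlinarith
    have h5 : t ^ 3 ≤ t * B := by nlinarith
    have h6 : (m : ℝ) ≤ B := by nlinarith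
    have h7 : (Y.ncard * B : ℝ) ≤ (2 * t) * B := by nlinarith
    exact le_of_mul_le_mul_right h7 hB0
  have hYnn : (0 : ℝ) ≤ Y.ncard := Nat.cast_nonneg _
  rcases disjoint_or_disjoint_of_separates hconn hint (A := {z | z ∈ C.support}) hsep with h | h
  · refine Or.inr ⟨{z | z ∈ C.support}, Y, ⟨u, C.start_mem_support⟩,
      fun a ha => hC.exists_adj_of_mem ha, ?_, h⟩
    rw [hcardC]
    have hCN' : (N : ℝ) ≤ C.length := by exact_mod_cast hCN
    nlinarith
  · refine Or.inl ⟨Y, by linarith, fun F hF => ?_⟩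
    refine (h F hF).resolve_right fun hdis => ?_
    obtain ⟨z, hz, hz'⟩ := hint F hF R hR
    exact Set.disjoint_left.1 hdis hz hz'

/-- A pairwise intersecting family of connected sets with short detours has a
small transversal. -/
theorem exists_small_transversal {V : Type*} [Fintype V] {G : SimpleGraph V}
    {𝓕 : Set (Set V)} (hconn : ∀ F ∈ 𝓕, WalkConnected G F)
    (hint : ∀ F ∈ 𝓕, ∀ F' ∈ 𝓕, (F ∩ F').Nonempty) {t : ℝ} (ht : 5 ≤ t)
    (hn : t ^ 3 = Fintype.card V) {m : ℕ} (hm : (m : ℝ) ^ 2 ≤ t)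
    (hdet : ∀ R ∈ 𝓕, HasDetourCover G (Fintype.card V) m R) :
    ∃ S : Set V, (S.ncard : ℝ) ≤ 5 * t ^ 2 ∧ ∀ F ∈ 𝓕, (F ∩ S).Nonempty := by
  classical
  have ht0 : 0 < t := by linarith
  suffices H : ∀ k : ℕ, ∀ Z : Set V, Zᶜ.ncard = k →
      ∃ S : Set V, (S.ncard : ℝ) ≤ 4 * t ^ 2 + k / t ∧
        ∀ F ∈ 𝓕, Disjoint F Z → (F ∩ S).Nonempty by
    obtain ⟨S, hS, hS'⟩ := H _ ∅ rfl
    refine ⟨S, hS.trans (le_of_eq ?_), fun F hF => hS' F hF (Set.disjoint_empty F)⟩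
    rw [Set.compl_empty, Set.ncard_univ, Nat.card_eq_fintype_card, ← hn]
    field_simp
    ring
  intro k
  induction k using Nat.strong_induction_on with
  | _ k ih =>
  intro Z hZ
  have hconn' : ∀ F ∈ {F | F ∈ 𝓕 ∧ Disjoint F Z}, WalkConnected (isolate G Z) F := by
    rintro F ⟨hF, hFZ⟩ x hx y hy
    obtain ⟨p, hp⟩ := hconn F hF x hx y hy
    obtain ⟨q, hq⟩ := exists_walk_isolate (D := Z) p
      (fun z hz => Set.disjoint_left.1 hFZ (hp z hz))
    exact ⟨q, by rwa [hq]⟩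
  have hint' : ∀ F ∈ {F | F ∈ 𝓕 ∧ Disjoint F Z}, ∀ F' ∈ {F | F ∈ 𝓕 ∧ Disjoint F Z},
      (F ∩ F').Nonempty := by
    rintro F ⟨hF, -⟩ F' ⟨hF', -⟩
    exact hint F hF F' hF'
  have hdet' : ∀ R ∈ {F | F ∈ 𝓕 ∧ Disjoint F Z},
      HasDetourCover (isolate G Z) (Fintype.card V) m R := by
    rintro R ⟨hR, -⟩ B hB
    obtain ⟨𝓑, h1, h2, h3⟩ := hdet R hR B hB
    refine ⟨𝓑, h1, h2, fun β hβ x hx y hy hxy d hd hdR => ?_⟩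
    have := h3 β hβ x hx y hy hxy (d.mapLe (isolate_le _ _))
      (by rwa [Walk.isPath_mapLe]) (by rwa [Walk.support_mapLe_eq_support])
    rwa [Walk.length_mapLe] at this
  rcases small_transversal_or_hasCheapSeparator hconn' hint' ht hn hm hdet' with
    ⟨S, hS, hS'⟩ | ⟨A, Y, hA, hAadj, hYA, hsep⟩
  · refine ⟨S, ?_, fun F hF hFZ => hS' F ⟨hF, hFZ⟩⟩
    have : (0 : ℝ) ≤ k / t := by positivity
    linarith
  · have hAZ : A ⊆ Zᶜ := fun a ha => (hAadj a ha).elim fun b hb => hb.2.1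
    have hsum : (Z ∪ A)ᶜ.ncard + A.ncard = k := by
      rw [← hZ, Set.compl_union, ← Set.sdiff_eq]
      exact Set.ncard_sdiff_add_ncard_of_subset hAZ (Set.toFinite _)
    have hApos : 0 < A.ncard := (Set.ncard_pos (Set.toFinite _)).2 hA
    obtain ⟨S, hS, hS'⟩ := ih _ (by omega) (Z ∪ A) rfl
    refine ⟨S ∪ Y, ?_, fun F hF hFZ => ?_⟩
    · have h1 : ((S ∪ Y).ncard : ℝ) ≤ S.ncard + Y.ncard := by
        exact_mod_cast Set.ncard_union_le S Y
      have h2 : (Y.ncard : ℝ) ≤ A.ncard / t := by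
        rw [le_div_iff₀ ht0]; linarith
      have h3 : ((Z ∪ A)ᶜ.ncard : ℝ) + A.ncard = k := by exact_mod_cast hsum
      rw [← h3, add_div]
      linarith
    · rcases hsep F ⟨hF, hFZ⟩ with ⟨z, hz, hzY⟩ | hFA
      · exact ⟨z, hz, Or.inr hzY⟩
      · obtain ⟨z, hz, hzS⟩ := hS' F hF (hFZ.union_right hFA)
        exact ⟨z, hz, Or.inl hzS⟩

theorem SimpleGraph.Walk.isCycle_copy_iff {V : Type*} {G : SimpleGraph V} {x y : V}
    (p : G.Walk x y) (h : y = x) :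
    (p.copy rfl h).IsCycle ↔ p.support.tail.Nodup ∧ 3 ≤ p.length := by
  subst h
  rw [Walk.copy_rfl_rfl, Walk.isCycle_iff_isPath_tail_and_le_length, Walk.isPath_def]
  refine and_congr_left fun h3 => ?_
  rw [Walk.support_tail_of_not_nil]
  intro hnil
  rw [← Walk.length_eq_zero_iff] at hnil
  omega

theorem SimpleGraph.Walk.exists_eq_append_append {V : Type*} {G : SimpleGraph V} {x y : V}
    (p : G.Walk x y) {i j : ℕ} (hij : i ≤ j) (hj : j ≤ p.length) :
    ∃ (p₁ : G.Walk x (p.getVert i)) (c : G.Walk (p.getVert i) (p.getVert j))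
      (p₂ : G.Walk (p.getVert j) y), p = p₁.append (c.append p₂) ∧ c.length = j - i := by
  have h : (p.drop i).getVert (j - i) = p.getVert j := by
    rw [Walk.drop_getVert]; congr 1; omega
  refine ⟨p.take i, ((p.drop i).take (j - i)).copy rfl h,
    ((p.drop i).drop (j - i)).copy h rfl, ?_, ?_⟩
  · rw [Walk.append_copy_copy, Walk.copy_rfl_rfl, Walk.append_take_drop_eq,
      Walk.append_take_drop_eq]
  · rw [Walk.length_copy, Walk.take_length, Walk.drop_length]; omega

theorem List.Nodup.replace_middle {α : Type*} {l₁ l₂ l₃ l : List α} {y : α}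
    (h : (l₁ ++ (l₂ ++ l₃)).Nodup) (hl : l.Nodup)
    (hy : y ∈ l₂) (hint : ∀ z ∈ l, z ∈ l₁ ∨ z ∈ l₃ → z = y) : (l₁ ++ (l ++ l₃)).Nodup := by
  rw [List.nodup_append'] at h ⊢
  obtain ⟨h1, h23, hd⟩ := h
  rw [List.nodup_append'] at h23 ⊢
  obtain ⟨h2, h3, hd'⟩ := h23
  refine ⟨h1, ⟨hl, h3, ?_⟩, ?_⟩
  · intro z hz hz'
    obtain rfl := hint z hz (Or.inr hz')
    exact hd' hy hz'
  · intro z hz hz'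
    rcases List.mem_append.1 hz' with hz' | hz'
    · obtain rfl := hint z hz' (Or.inl hz)
      exact hd hz (List.mem_append_left _ hy)
    · exact hd hz (List.mem_append_right _ hz')

/-- The data `b`, `u`, `v`, `P` describe an `M`-subdivision in `G`. -/
structure SubdivisionData {V W F : Type*} (M : Multigraph W F) (G : SimpleGraph V)
    (b : W → V) (u v : F → W) (P : ∀ e : F, G.Walk (b (u e)) (b (v e))) : Prop where
  inj : Function.Injective b
  ends : ∀ e, M.ends e = s(u e, v e)
  cycle : ∀ e, u e = v e → (P e).support.tail.Nodup ∧ 3 ≤ (P e).length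
  path : ∀ e, u e ≠ v e → (P e).IsPath
  branch : ∀ e, ∀ x ∈ (P e).support, x ∈ Set.range b → x = b (u e) ∨ x = b (v e)
  vertDisj : ∀ e e', e ≠ e' → ∀ x, x ∈ (P e).support → x ∈ (P e').support → x ∈ Set.range b
  edgeDisj : ∀ e e', e ≠ e' → ∀ a, a ∈ (P e).edges → a ∉ (P e').edges

/-- The subgraph that is the union of the walks `P e` and the vertices `b w`. -/
def walkUnion {V W F : Type*} {G : SimpleGraph V} (b : W → V) {u v : F → W}
    (P : ∀ e : F, G.Walk (b (u e)) (b (v e))) : G.Subgraph where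
  verts := Set.range b ∪ ⋃ e, {x | x ∈ (P e).support}
  Adj x y := ∃ e, (P e).toSubgraph.Adj x y
  adj_sub := fun ⟨_, h⟩ => h.adj_sub
  edge_vert := fun ⟨e, h⟩ => Or.inr (Set.mem_iUnion.2
    ⟨e, (P e).mem_verts_toSubgraph.1 h.fst_mem⟩)
  symm := ⟨fun _ _ ⟨e, h⟩ => ⟨e, h.symm⟩⟩

theorem isSubdivisionIn_iff {V W F : Type*} {M : Multigraph W F} {G : SimpleGraph V}
    {Q : G.Subgraph} : IsSubdivisionIn M G Q ↔
      ∃ (b : W → V) (u v : F → W) (P : ∀ e : F, G.Walk (b (u e)) (b (v e))),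
        SubdivisionData M G b u v P ∧ Q = walkUnion b P := by
  constructor
  · rintro ⟨b, u, v, P, h1, h2, h3, h4, h5, h6, h7, h8, h9⟩
    refine ⟨b, u, v, P, ⟨h1, h2, fun e he => ?_, h4, h5, h6, h7⟩, ?_⟩
    · exact (Walk.isCycle_copy_iff _ _).1 (h3 e he)
    · ext x y
      · rw [h8]; rfl
      · rw [h9]; rfl
  · rintro ⟨b, u, v, P, h, rfl⟩
    exact ⟨b, u, v, P, h.inj, h.ends, fun e he => (Walk.isCycle_copy_iff _ _).2 (h.cycle e he),
      h.path, h.branch, h.vertDisj, h.edgeDisj, rfl, fun _ _ => Iff.rfl⟩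

namespace SubdivisionData

variable {V W F : Type*} {M : Multigraph W F} {G : SimpleGraph V}
  {b : W → V} {u v : F → W} {P : ∀ e : F, G.Walk (b (u e)) (b (v e))}

theorem support_subset (e : F) : ∀ x ∈ (P e).support, x ∈ (walkUnion b P).verts :=
  fun _ hx => Or.inr (Set.mem_iUnion.2 ⟨e, hx⟩)

theorem edges_nodup (h : SubdivisionData M G b u v P) (e : F) : (P e).edges.Nodup := by
  by_cases he : u e = v e
  · have := (Walk.isCycle_copy_iff (P e) (congrArg b he.symm)).2 (h.cycle e he)
    simpa using this.isTrail.edges_nodup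
  · exact (h.path e he).isTrail.edges_nodup

theorem support_tail_nodup (h : SubdivisionData M G b u v P) (e : F) :
    (P e).support.tail.Nodup := by
  by_cases he : u e = v e
  · exact (h.cycle e he).1
  · exact (h.path e he).support_nodup.tail

theorem ncard_edgeSet [Fintype F] (h : SubdivisionData M G b u v P) :
    (walkUnion b P).edgeSet.ncard = ∑ e, (P e).length := by
  classical
  have : (walkUnion b P).edgeSet =
      ((Finset.univ.biUnion fun e => (P e).edges.toFinset : Finset (Sym2 V)) : Set (Sym2 V)) := by
    ext a
    induction a with
    | _ x y =>
    simp only [Subgraph.mem_edgeSet, Finset.coe_biUnion, Finset.coe_univ, Set.mem_univ,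
      Set.iUnion_true, Set.mem_iUnion, List.coe_toFinset, Set.mem_ofPred_eq]
    refine exists_congr fun e => ?_
    rw [← Walk.mem_edges_toSubgraph, Subgraph.mem_edgeSet]
  rw [this, Set.ncard_coe_finset, Finset.card_biUnion]
  · refine Finset.sum_congr rfl fun e _ => ?_
    rw [List.toFinset_card_of_nodup (h.edges_nodup e), Walk.length_edges]
  · intro e _ e' _ hne
    rw [Function.onFun, Finset.disjoint_left]
    intro a ha ha'
    rw [List.mem_toFinset] at ha ha'
    exact h.edgeDisj e e' hne a ha ha'

theorem getVert_inj (h : SubdivisionData M G b u v P) (e : F) {i j : ℕ} (hi : 1 ≤ i)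
    (hj : 1 ≤ j) (hi' : i ≤ (P e).length) (hj' : j ≤ (P e).length)
    (hij : (P e).getVert i = (P e).getVert j) : i = j := by
  have hn := h.support_tail_nodup e
  obtain ⟨i, rfl⟩ := Nat.exists_eq_add_of_le' hi
  obtain ⟨j, rfl⟩ := Nat.exists_eq_add_of_le' hj
  rw [Walk.getVert_eq_support_getElem _ hi', Walk.getVert_eq_support_getElem _ hj'] at hij
  have := (hn.getElem_inj_iff (i := i) (j := j)
    (hi := by simp; omega) (hj := by simp; omega)).1 (by simpa using hij)
  omega

theorem getVert_notMem_range (h : SubdivisionData M G b u v P) (e : F) {i : ℕ} (hi : 1 ≤ i)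
    (hi' : i < (P e).length) : (P e).getVert i ∉ Set.range b := by
  intro hr
  have hv : (P e).getVert i ≠ b (v e) := by
    intro heq
    have := h.getVert_inj e hi (by omega : 1 ≤ (P e).length) hi'.le le_rfl
      (by rw [heq, Walk.getVert_length])
    omega
  rcases h.branch e _ ((P e).getVert_mem_support i) hr with heq | heq
  · by_cases he : u e = v e
    · exact hv (by rw [heq, he])
    · have := (h.path e he).getVert_injOn (by simpa using hi'.le) (by simp)
        (heq.trans (P e).getVert_zero.symm)
      omega
  · exact hv heq

theorem sum_length_le [Fintype F] [Fintype V] (h : SubdivisionData M G b u v P) :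
    ∑ e, (P e).length ≤ Fintype.card V + Fintype.card F := by
  classical
  have h1 : ∑ e, ((P e).length - 1) ≤ Fintype.card V := by
    rw [← Finset.card_univ (α := V)]
    refine le_trans (le_of_eq ?_) (Finset.card_le_card (Finset.subset_univ
      (Finset.univ.biUnion fun e => (Finset.Ico 1 (P e).length).image (P e).getVert)))
    rw [Finset.card_biUnion]
    · refine Finset.sum_congr rfl fun e _ => ?_
      rw [Finset.card_image_of_injOn, Nat.card_Ico]
      intro i hi j hj hij
      rw [Finset.coe_Ico, Set.mem_Ico] at hi hj
      exact h.getVert_inj e hi.1 hj.1 hi.2.le hj.2.le hij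
    · intro e _ e' _ hne
      rw [Function.onFun, Finset.disjoint_left]
      intro a ha ha'
      obtain ⟨i, hi, rfl⟩ := Finset.mem_image.1 ha
      obtain ⟨j, hj, hij⟩ := Finset.mem_image.1 ha'
      rw [Finset.mem_Ico] at hi
      exact h.getVert_notMem_range e hi.1 hi.2 (h.vertDisj e e' hne _
        ((P e).getVert_mem_support i) (hij ▸ (P e').getVert_mem_support j))
  calc ∑ e, (P e).length ≤ ∑ e, (((P e).length - 1) + 1) :=
        Finset.sum_le_sum fun e _ => by omega
    _ = ∑ e, ((P e).length - 1) + Fintype.card F := by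
        rw [Finset.sum_add_distrib]; simp
    _ ≤ _ := by omega

theorem walkConnected (h : SubdivisionData M G b u v P) (hM : M.Connected) :
    WalkConnected G (walkUnion b P).verts := by
  classical
  obtain ⟨⟨w₀⟩, hM⟩ := hM
  set D := (walkUnion b P).verts with hD
  have hstep : ∀ e, ∀ x ∈ (P e).support, ∀ y ∈ (P e).support, x ∈ reachWithin G D (b w₀) →
      y ∈ reachWithin G D (b w₀) := by
    rintro e x hx y hy ⟨p, hp⟩
    refine ⟨p.append (((P e).takeUntil x hx).reverse.append ((P e).takeUntil y hy)), ?_⟩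
    intro z hz
    rw [Walk.mem_support_append_iff, Walk.mem_support_append_iff, Walk.support_reverse,
      List.mem_reverse] at hz
    rcases hz with hz | hz | hz
    · exact hp z hz
    · exact support_subset e z ((P e).support_takeUntil_subset_support hx hz)
    · exact support_subset e z ((P e).support_takeUntil_subset_support hy hz)
  have hbranch : ∀ w, b w ∈ reachWithin G D (b w₀) := by
    intro w
    induction hM w₀ w with
    | refl =>
      refine ⟨Walk.nil, fun z hz => ?_⟩
      rw [Walk.support_nil, List.mem_singleton] at hz
      exact hz ▸ Or.inl (Set.mem_range_self w₀)
    | tail _ hadj ih =>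
      obtain ⟨e, he⟩ := hadj
      rw [h.ends e] at he
      rcases Sym2.eq_iff.1 he with ⟨h1, h2⟩ | ⟨h1, h2⟩
      · rw [← h1] at ih
        rw [← h2]
        exact hstep e _ (P e).start_mem_support _ (P e).end_mem_support ih
      · rw [← h2] at ih
        rw [← h1]
        exact hstep e _ (P e).end_mem_support _ (P e).start_mem_support ih
  have hall : D ⊆ reachWithin G D (b w₀) := by
    rintro x (⟨w, rfl⟩ | hx)
    · exact hbranch w
    · obtain ⟨e, he⟩ := Set.mem_iUnion.1 hx
      exact hstep e _ (P e).start_mem_support x he (hbranch _)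
  have heq : D = reachWithin G D (b w₀) := hall.antisymm reachWithin_subset
  rw [heq]
  exact walkConnected_reachWithin

/-- Replacing a segment of one of the walks by a detour. -/
theorem update [DecidableEq F] (h : SubdivisionData M G b u v P) {e : F} {x y : V}
    {p₁ : G.Walk (b (u e)) x} {c : G.Walk x y} {p₂ : G.Walk y (b (v e))}
    (hP : P e = p₁.append (c.append p₂)) (hxy : x ≠ y) {d : G.Walk x y} (hd : d.IsPath)
    (hd2 : 2 ≤ d.length) (hcd : c.length ≤ d.length)
    (hdR : ∀ z ∈ d.support, z ∈ (walkUnion b P).verts → z = x ∨ z = y) :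
    SubdivisionData M G b u v (Function.update P e (p₁.append (d.append p₂))) := by
  set w := p₁.append (d.append p₂) with hw
  have hPe : ∀ z ∈ (P e).support, z ∈ (walkUnion b P).verts := support_subset e
  have hxP : x ∈ (P e).support := by
    rw [hP, Walk.mem_support_append_iff]; exact Or.inl p₁.end_mem_support
  have hyP : y ∈ (P e).support := by
    rw [hP, Walk.mem_support_append_iff, Walk.mem_support_append_iff]
    exact Or.inr (Or.inl c.end_mem_support)
  have hlen : (P e).length ≤ w.length := by
    rw [hP, hw, Walk.length_append, Walk.length_append, Walk.length_append, Walk.length_append]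
    omega
  have hsupp : ∀ z ∈ w.support, z ∈ (walkUnion b P).verts → z ∈ (P e).support := by
    intro z hz hzR
    rw [hw, Walk.mem_support_append_iff, Walk.mem_support_append_iff] at hz
    rcases hz with hz | hz | hz
    · rw [hP, Walk.mem_support_append_iff]; exact Or.inl hz
    · rcases hdR z hz hzR with rfl | rfl
      · exact hxP
      · exact hyP
    · rw [hP, Walk.mem_support_append_iff, Walk.mem_support_append_iff]
      exact Or.inr (Or.inr hz)
  have hedge : ∀ e', e' ≠ e → ∀ a, a ∈ w.edges → a ∉ (P e').edges := by
    intro e' hne a ha ha'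
    rw [hw, Walk.edges_append, List.mem_append, Walk.edges_append, List.mem_append] at ha
    have hnot : a ∉ (P e).edges := fun hh => h.edgeDisj e e' hne.symm a hh ha'
    rw [hP, Walk.edges_append, List.mem_append, Walk.edges_append, List.mem_append] at hnot
    have had : a ∈ d.edges := by tauto
    induction a with
    | _ s r =>
    have hs := hdR s (d.fst_mem_support_of_mem_edges had)
      (support_subset e' s ((P e').fst_mem_support_of_mem_edges ha'))
    have hr := hdR r (d.snd_mem_support_of_mem_edges had)
      (support_subset e' r ((P e').snd_mem_support_of_mem_edges ha'))
    have hsr := (d.adj_of_mem_edges had).ne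
    have hmem : s(x, y) ∈ d.edges := by
      rcases hs with rfl | rfl <;> rcases hr with rfl | rfl
      · exact (hsr rfl).elim
      · exact had
      · rwa [Sym2.eq_swap]
      · exact (hsr rfl).elim
    have := hd.length_eq_one_of_mem_edges hmem
    omega
  have hyc : y ∈ c.support.tail := by
    have := c.end_mem_support
    rw [← c.cons_tail_support, List.mem_cons] at this
    exact this.resolve_left hxy.symm
  have hxd : x ∉ d.support.tail := by
    have := hd.support_nodup
    rw [← d.cons_tail_support] at this
    exact (List.nodup_cons.1 this).1
  have hint : ∀ z ∈ d.support.tail, z ∈ (P e).support → z = y := by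
    intro z hz hzP
    rcases hdR z (List.mem_of_mem_tail hz) (hPe z hzP) with rfl | hz'
    · exact (hxd hz).elim
    · exact hz'
  have hp₁P : ∀ z ∈ p₁.support, z ∈ (P e).support := fun z hz => by
    rw [hP, Walk.mem_support_append_iff]; exact Or.inl hz
  have hp₂P : ∀ z ∈ p₂.support, z ∈ (P e).support := fun z hz => by
    rw [hP, Walk.mem_support_append_iff, Walk.mem_support_append_iff]; exact Or.inr (Or.inr hz)
  refine ⟨h.inj, h.ends, ?_, ?_, ?_, ?_, ?_⟩
  · intro e' he'
    by_cases hee : e' = e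
    · subst hee
      rw [Function.update_self]
      obtain ⟨h1, h2⟩ := h.cycle _ he'
      refine ⟨?_, h2.trans hlen⟩
      rw [hP, Walk.tail_support_append, Walk.tail_support_append] at h1
      rw [hw, Walk.tail_support_append, Walk.tail_support_append]
      refine h1.replace_middle hd.support_nodup.tail hyc fun z hz hz' => hint z hz ?_
      rcases hz' with hz' | hz'
      · exact hp₁P z (List.mem_of_mem_tail hz')
      · exact hp₂P z (List.mem_of_mem_tail hz')
    · rw [Function.update_of_ne hee]
      exact h.cycle e' he'
  · intro e' he'
    by_cases hee : e' = e
    · subst hee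
      rw [Function.update_self]
      have h1 := h.path _ he'
      rw [hP, Walk.isPath_def, Walk.support_append, Walk.tail_support_append] at h1
      rw [hw, Walk.isPath_def, Walk.support_append, Walk.tail_support_append]
      refine h1.replace_middle hd.support_nodup.tail hyc fun z hz hz' => hint z hz ?_
      rcases hz' with hz' | hz'
      · exact hp₁P z hz'
      · exact hp₂P z (List.mem_of_mem_tail hz')
    · rw [Function.update_of_ne hee]
      exact h.path e' he'
  · intro e' z hz hzb
    by_cases hee : e' = e
    · subst hee
      rw [Function.update_self] at hz
      exact h.branch _ z (hsupp z hz (Or.inl hzb)) hzb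
    · rw [Function.update_of_ne hee] at hz
      exact h.branch _ z hz hzb
  · intro e₁ e₂ hne z hz₁ hz₂
    by_cases h1 : e₁ = e
    · subst h1
      rw [Function.update_self] at hz₁
      rw [Function.update_of_ne hne.symm] at hz₂
      exact h.vertDisj _ _ hne z (hsupp z hz₁ (support_subset e₂ z hz₂)) hz₂
    · rw [Function.update_of_ne h1] at hz₁
      by_cases h2 : e₂ = e
      · subst h2
        rw [Function.update_self] at hz₂
        exact h.vertDisj _ _ hne z hz₁ (hsupp z hz₂ (support_subset e₁ z hz₁))
      · rw [Function.update_of_ne h2] at hz₂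
        exact h.vertDisj _ _ hne z hz₁ hz₂
  · intro e₁ e₂ hne a ha₁ ha₂
    by_cases h1 : e₁ = e
    · subst h1
      rw [Function.update_self] at ha₁
      rw [Function.update_of_ne hne.symm] at ha₂
      exact hedge e₂ hne.symm a ha₁ ha₂
    · rw [Function.update_of_ne h1] at ha₁
      by_cases h2 : e₂ = e
      · subst h2
        rw [Function.update_self] at ha₂
        exact hedge e₁ hne a ha₂ ha₁
      · rw [Function.update_of_ne h2] at ha₂
        exact h.edgeDisj _ _ hne a ha₁ ha₂

theorem length_lt_of_detour [Fintype F] (h : SubdivisionData M G b u v P)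
    (hmax : IsMaxSubdivisionIn M G ⊤ (walkUnion b P)) {e : F} {i j B : ℕ} (hij : i ≤ j)
    (hj : j ≤ (P e).length) (hB : 2 ≤ B) (hjB : j - i < B)
    (hne : (P e).getVert i ≠ (P e).getVert j)
    {d : G.Walk ((P e).getVert i) ((P e).getVert j)} (hd : d.IsPath)
    (hdR : ∀ z ∈ d.support, z ∈ (walkUnion b P).verts →
      z = (P e).getVert i ∨ z = (P e).getVert j) : d.length < B := by
  classical
  by_contra! hlen
  obtain ⟨p₁, c, p₂, hP, hc⟩ := (P e).exists_eq_append_append hij hj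
  have h' := h.update hP hne hd (by omega) (by omega) hdR
  have hle := hmax.2.2 _ (isSubdivisionIn_iff.2 ⟨b, u, v, _, h', rfl⟩) le_top
  rw [h.ncard_edgeSet, h'.ncard_edgeSet] at hle
  refine absurd hle (not_le.2 (Finset.sum_lt_sum (fun e' _ => ?_) ⟨e, Finset.mem_univ e, ?_⟩))
  · by_cases hee : e' = e
    · subst hee
      rw [Function.update_self]
      conv_lhs => rw [hP]
      simp only [Walk.length_append]
      omega
    · rw [Function.update_of_ne hee]
  · rw [Function.update_self]
    conv_lhs => rw [hP]
    simp only [Walk.length_append]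
    omega

theorem hasDetourCover [Fintype F] [Fintype V] (h : SubdivisionData M G b u v P)
    (hM : M.Connected) (hmax : IsMaxSubdivisionIn M G ⊤ (walkUnion b P)) :
    HasDetourCover G (Fintype.card V) (Fintype.card F) (walkUnion b P).verts := by
  classical
  intro B hB
  set seg : F → ℕ → Set V :=
    fun e q => {x | ∃ i ≤ (P e).length, i / B = q ∧ (P e).getVert i = x} with hseg
  set rest : Set V := {x | x ∈ Set.range b ∧ ∀ e, x ∉ (P e).support} with hrest
  refine ⟨insert rest (Finset.univ.biUnion fun e =>
    (Finset.range ((P e).length / B + 1)).image (seg e)), ?_, ?_, ?_⟩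
  · have hsum := h.sum_length_le
    have h1 : (insert rest (Finset.univ.biUnion fun e =>
        (Finset.range ((P e).length / B + 1)).image (seg e))).card ≤
        (∑ e, ((P e).length / B + 1)) + 1 := by
      refine (Finset.card_insert_le _ _).trans (Nat.add_le_add_right ?_ 1)
      refine Finset.card_biUnion_le.trans (Finset.sum_le_sum fun e _ => ?_)
      exact Finset.card_image_le.trans (by rw [Finset.card_range])
    refine (Nat.mul_le_mul_right B h1).trans ?_
    rw [Finset.sum_add_distrib, Finset.sum_const, Finset.card_univ, smul_eq_mul, mul_one]
    have h2 : (∑ e, (P e).length / B) * B ≤ ∑ e, (P e).length := by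
      rw [Finset.sum_mul]
      exact Finset.sum_le_sum fun e _ => Nat.div_mul_le_self _ _
    nlinarith
  · intro x hx
    by_cases hxe : ∃ e, x ∈ (P e).support
    · obtain ⟨e, he⟩ := hxe
      obtain ⟨i, rfl, hi⟩ := Walk.mem_support_iff_exists_getVert.1 he
      refine ⟨seg e (i / B), ?_, i, hi, rfl, rfl⟩
      refine Finset.mem_insert_of_mem (Finset.mem_biUnion.2 ⟨e, Finset.mem_univ e, ?_⟩)
      refine Finset.mem_image_of_mem _ (Finset.mem_range.2 ?_)
      exact Nat.lt_succ_of_le (Nat.div_le_div_right hi)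
    · push Not at hxe
      refine ⟨rest, Finset.mem_insert_self _ _, ?_, hxe⟩
      rcases hx with hx | hx
      · exact hx
      · obtain ⟨e, he⟩ := Set.mem_iUnion.1 hx
        exact (hxe e he).elim
  · intro β hβ
    rcases Finset.mem_insert.1 hβ with rfl | hβ
    · rintro _ ⟨⟨w, rfl⟩, hx⟩ _ ⟨⟨w', rfl⟩, -⟩ hne
      exfalso
      rcases (hM.2 w w').cases_head with rfl | ⟨c, ⟨e, he⟩, -⟩
      · exact hne rfl
      · rw [h.ends e] at he
        rcases Sym2.eq_iff.1 he with ⟨h1, -⟩ | ⟨-, h1⟩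
        · exact hx e (h1 ▸ (P e).start_mem_support)
        · exact hx e (h1 ▸ (P e).end_mem_support)
    · obtain ⟨e, -, hβ⟩ := Finset.mem_biUnion.1 hβ
      obtain ⟨q, -, rfl⟩ := Finset.mem_image.1 hβ
      rintro _ ⟨i, hi, hiq, rfl⟩ _ ⟨j, hj, hjq, rfl⟩ hne d hd hdR
      have hi1 := Nat.div_add_mod i B
      have hj1 := Nat.div_add_mod j B
      have hi2 := Nat.mod_lt i (by omega : B > 0)
      have hj2 := Nat.mod_lt j (by omega : B > 0)
      rw [hiq] at hi1
      rw [hjq] at hj1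
      rcases le_total i j with hij | hij
      · exact h.length_lt_of_detour hmax hij hj hB (by omega) hne hd hdR
      · rw [← Walk.length_reverse]
        refine h.length_lt_of_detour hmax hij hi hB (by omega) hne.symm hd.reverse ?_
        intro z hz hzR
        rw [Walk.support_reverse, List.mem_reverse] at hz
        exact (hdR z hz hzR).symm

end SubdivisionData

/-- If `L(M,G)` is pairwise intersecting, `m^3 < n` and `n ≥ m^6`, then
`τ(M,G) ≤ 5 n^{2/3}`. -/
theorem gallai_stmt1 {V W F : Type*} [Fintype V] [Fintype W] [Fintype F]
    (M : Multigraph W F) (hM : M.Connected) (G : SimpleGraph V)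
    (hpi : PairwiseIntersectingIn M G ⊤)
    (hn : (Fintype.card F) ^ 3 < Fintype.card V)
    (hn6 : (Fintype.card F) ^ 6 ≤ Fintype.card V) :
    ∃ S : Set V, IsTransversalIn M G ⊤ S ∧
      (S.ncard : ℝ) ≤ 5 * (Fintype.card V : ℝ) ^ ((2 : ℝ) / 3) := by
  have hisdata : ∀ Q : G.Subgraph, IsMaxSubdivisionIn M G ⊤ Q →
      WalkConnected G Q.verts ∧
        HasDetourCover G (Fintype.card V) (Fintype.card F) Q.verts := by
    intro Q hQ
    obtain ⟨b, u, v, P, h, rfl⟩ := isSubdivisionIn_iff.1 hQ.1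
    exact ⟨h.walkConnected hM, h.hasDetourCover hM hQ⟩
  set n : ℝ := (Fintype.card V : ℝ) with hn_def
  set t : ℝ := n ^ ((1 : ℝ) / 3) with ht_def
  have hn0 : 0 ≤ n := Nat.cast_nonneg _
  have ht0 : 0 ≤ t := Real.rpow_nonneg hn0 _
  have ht3 : t ^ 3 = n := by
    rw [ht_def, ← Real.rpow_natCast, ← Real.rpow_mul hn0]
    norm_num
  have ht2 : n ^ ((2 : ℝ) / 3) = t ^ 2 := by
    rw [ht_def, ← Real.rpow_natCast, ← Real.rpow_mul hn0]
    norm_num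
  rw [ht2]
  rcases le_total t 5 with h5 | h5
  · refine ⟨Set.univ, fun Q hQ => ?_, ?_⟩
    · simpa using hpi Q Q hQ hQ
    · rw [Set.ncard_univ, Nat.card_eq_fintype_card, ← hn_def, ← ht3]
      nlinarith [mul_le_mul_of_nonneg_right h5 (sq_nonneg t)]
  · have hm : (Fintype.card F : ℝ) ^ 2 ≤ t := by
      refine le_of_pow_le_pow_left₀ three_ne_zero ht0 ?_
      rw [ht3, ← pow_mul, hn_def]
      exact_mod_cast hn6
    obtain ⟨S, hcard, hS⟩ := exists_small_transversal (G := G)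
      (𝓕 := {X | ∃ Q, IsMaxSubdivisionIn M G ⊤ Q ∧ X = Q.verts})
      (by rintro _ ⟨Q, hQ, rfl⟩; exact (hisdata Q hQ).1)
      (by rintro _ ⟨Q, hQ, rfl⟩ _ ⟨R, hR, rfl⟩; exact hpi Q R hQ hR)
      h5 ht3 hm
      (by rintro _ ⟨Q, hQ, rfl⟩; exact (hisdata Q hQ).2)
    exact ⟨S, fun Q hQ => Set.inter_comm S _ ▸ hS _ ⟨Q, hQ, rfl⟩, hcard⟩
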